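/- arXiv:1803.04204 — 7 statements merged into one kernel-verified Lean document; each statement's English description precedes it below -/
import Mathlib

section
/- Consider the semiparametric contextual bandit problem with d = 2 and two actions. For any algorithm that at each round t chooses its action a_t as a deterministic function of the observable history H_t = {x_{1:t}, a_{1:t-1}, r_{1:t-1}}, there exists a semiparametric contextual bandit instance (a choice of parameter θ ∈ ℝ², contexts, confounding terms f_t chosen by an adaptive adversary, and zero noise) on which the regret of the algorithm over T rounds is at least T/2. Concretely: with contexts x_t = {e₁, e₂} at every round, θ ∈ {e₁, e₂}, ξ_t = 0, and f_t(x_t) = −1{a_t = argmax_a ⟨θ, z_{t,a}⟩}, the observed reward is 0 at every round, and for at least one of the two choices of θ the algorithm plays the suboptimal action at least T/2 times, incurring regret at least T/2. -/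
open Matrix Finset

/-- The two feature vectors / parameters: `e false = e₁ = (1,0)`, `e true = e₂ = (0,1)` in `ℝ²`.
Actions are identified with `Bool` (`false ↦ e₁`, `true ↦ e₂`). -/
noncomputable def lbVec : Bool → (Fin 2 → ℝ) := fun b => if b then ![0, 1] else ![1, 0]

/-! Subtracting `1` from the reward exactly when the optimal action is played makes every observed
reward `0`, so a deterministic algorithm plays the same actions whatever the parameter is. With `K`
orthonormal candidates for the parameter, each action is optimal for exactly one of them and costs
`1` for the others; in total the candidates incur regret `(K - 1) * T`, and one of them incurs at
least the average. -/

theorem actions_eq_of_same_rewards {α ρ : Type*} {alg : (t : ℕ) → (Fin t → α) → (Fin t → ρ) → α}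
    {a b : ℕ → α} {r : ℕ → ρ}
    (ha : ∀ t, a t = alg t (fun i => a i) (fun i => r i))
    (hb : ∀ t, b t = alg t (fun i => b i) (fun i => r i)) : a = b := by
  funext t
  induction t using Nat.strong_induction_on with
  | _ t ih =>
    have past_eq : (fun i : Fin t => a i) = fun i : Fin t => b i := funext fun i => ih i i.isLt
    rw [ha, hb, past_eq]

section OrthonormalFamily

variable {ι n : Type*} [Fintype ι] [DecidableEq ι] [Fintype n] {v : ι → n → ℝ}

theorem sum_dotProduct_sub_of_orthonormal
    (hv : ∀ i j, v i ⬝ᵥ v j = if j = i then 1 else 0) (c : ι) :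
    ∑ θ, v θ ⬝ᵥ (v θ - v c) = Fintype.card ι - 1 := by
  simp only [dotProduct_sub, hv, if_true, sum_sub_distrib, sum_ite_eq, mem_univ, sum_const,
    card_univ, nsmul_eq_mul, mul_one]

theorem exists_le_sum_dotProduct_sub_of_orthonormal [Nonempty ι]
    (hv : ∀ i j, v i ⬝ᵥ v j = if j = i then 1 else 0) (c : ℕ → ι) (T : ℕ) :
    ∃ θ, (1 - (Fintype.card ι : ℝ)⁻¹) * T ≤ ∑ t ∈ range T, v θ ⬝ᵥ (v θ - v (c t)) := by
  have regret_total :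
      ∑ θ, ∑ t ∈ range T, v θ ⬝ᵥ (v θ - v (c t)) = T * (Fintype.card ι - 1 : ℝ) := by
    rw [sum_comm]
    simp only [sum_dotProduct_sub_of_orthonormal hv, sum_const, card_range, nsmul_eq_mul]
  have average_total :
      ∑ _θ : ι, (1 - (Fintype.card ι : ℝ)⁻¹) * T = T * (Fintype.card ι - 1 : ℝ) := by
    rw [sum_const, card_univ, nsmul_eq_mul]
    field_simp
  obtain ⟨θ, -, le_regret⟩ :=
    exists_le_of_sum_le univ_nonempty (average_total.trans regret_total.symm).le
  exact ⟨θ, le_regret⟩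

theorem stmt_0_general [Nonempty ι]
    (hv : ∀ i j, v i ⬝ᵥ v j = if j = i then 1 else 0) (T : ℕ)
    (alg : (t : ℕ) → (Fin t → ι) → (Fin t → ℝ) → ι)
    (a : ι → ℕ → ι) (r : ι → ℕ → ℝ)
    (hr : ∀ θ t, r θ t = v θ ⬝ᵥ v (a θ t) - (if a θ t = θ then (1 : ℝ) else 0))
    (ha : ∀ θ t, a θ t = alg t (fun i : Fin t => a θ i) (fun i : Fin t => r θ i)) :
    (∀ θ t, r θ t = 0) ∧
      ∃ θ, (1 - (Fintype.card ι : ℝ)⁻¹) * T ≤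
        ∑ t ∈ range T, v θ ⬝ᵥ (v θ - v (a θ t)) := by
  have rewards_zero (θ : ι) (t : ℕ) : r θ t = 0 := by rw [hr, hv, sub_self]
  have actions_eq (θ θ' : ι) : a θ = a θ' := by
    have rewards_eq : r θ = r θ' := funext fun t => by rw [rewards_zero, rewards_zero]
    exact actions_eq_of_same_rewards (ha θ) (rewards_eq ▸ ha θ')
  obtain ⟨θ₀⟩ := ‹Nonempty ι›
  have ⟨θ, le_regret⟩ := exists_le_sum_dotProduct_sub_of_orthonormal hv (a θ₀) T
  exact ⟨rewards_zero, θ, actions_eq θ θ₀ ▸ le_regret⟩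

end OrthonormalFamily

theorem lbVec_dotProduct_lbVec (b c : Bool) :
    lbVec b ⬝ᵥ lbVec c = if c = b then 1 else 0 := by
  cases b <;> cases c <;> simp [lbVec]

/-- **Lower bound against deterministic algorithms (Proposition 1).**
Consider the semiparametric contextual bandit problem with `d = 2` and two actions, with the
context `x_t = {e₁, e₂}` at every round.  An algorithm chooses `a_t` as a deterministic
function `alg` of the observable history (the round index, which determines `x_{1:t}`, and the
past actions and rewards).  For the instances with `θ ∈ {e₁, e₂}`, zero noise `ξ_t = 0`, and
adversarial confounder `f_t(x_t) = −1{a_t = argmax_a ⟨θ, z_{t,a}⟩}`: the observed reward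
`r_t = ⟨θ, z_{t,a_t}⟩ + f_t(x_t)` is `0` at every round, and for at least one of the two
choices of `θ` the regret `∑_{t=1}^T ⟨θ, z_{t,a_t^⋆} − z_{t,a_t}⟩` is at least `T/2`. -/
theorem stmt_0 (T : ℕ)
    (alg : (t : ℕ) → (Fin t → Bool) → (Fin t → ℝ) → Bool)
    (a : Bool → ℕ → Bool) (r : Bool → ℕ → ℝ)
    -- reward of round `t` on the instance `θ`: linear part plus confounder, zero noise
    (hr : ∀ θ t, r θ t =
      lbVec θ ⬝ᵥ lbVec (a θ t) - (if a θ t = θ then (1 : ℝ) else 0))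
    -- the algorithm's action is a deterministic function of the observable history
    (ha : ∀ θ t, a θ t =
      alg t (fun i : Fin t => a θ i) (fun i : Fin t => r θ i)) :
    (∀ θ t, r θ t = 0) ∧
      ∃ θ : Bool, (T : ℝ) / 2 ≤
        ∑ t ∈ Finset.range T, lbVec θ ⬝ᵥ (lbVec θ - lbVec (a θ t)) := by
  have half : (1 - (Fintype.card Bool : ℝ)⁻¹) * T = T / 2 := by norm_num [Fintype.card_bool]; ring
  exact half ▸ stmt_0_general lbVec_dotProduct_lbVec T alg a r hr ha
end

section
/- Let X₁,…,X_n be vectors in ℝ^d with ‖X_i‖₂ ≤ L for all i ∈ [n], and let λ > 0. Define Γ := λI + Σ_{i=1}^n X_i X_iᵀ. Then det(Γ) ≤ (λ + nL²/d)^d. -/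
open Matrix Finset

/-!
The arithmetic-geometric mean inequality applied to the eigenvalues of a positive semidefinite
matrix `A` of size `d` gives `det A ≤ (tr A / d) ^ d`. For `Γ = λ I + ∑ᵢ Xᵢ Xᵢ*` the trace is
`d λ + ∑ᵢ ‖Xᵢ‖²`.
-/

theorem prod_le_sum_div_card_pow {ι : Type*} (s : Finset ι) {f : ι → ℝ}
    (hf : ∀ i ∈ s, 0 ≤ f i) : ∏ i ∈ s, f i ≤ ((∑ i ∈ s, f i) / #s) ^ #s := by
  obtain rfl | hs := s.eq_empty_or_nonempty
  · simp
  have prod_nonneg : 0 ≤ ∏ i ∈ s, f i := Finset.prod_nonneg hf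
  have geom_mean_le : (∏ i ∈ s, f i) ^ (#s : ℝ)⁻¹ ≤ (∑ i ∈ s, f i) / #s := by
    simpa using Real.geom_mean_le_arith_mean s (fun _ ↦ 1) f (by simp) (by simpa using hs) hf
  calc ∏ i ∈ s, f i = ((∏ i ∈ s, f i) ^ (#s : ℝ)⁻¹) ^ #s :=
        (Real.rpow_inv_natCast_pow prod_nonneg hs.card_ne_zero).symm
    _ ≤ ((∑ i ∈ s, f i) / #s) ^ #s := by gcongr

section RCLike

open RCLike
open scoped ComplexOrder

variable {𝕜 m ι : Type*} [RCLike 𝕜] [DecidableEq m]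

theorem posSemidef_smul_one_add_sum_vecMulVec [Finite m] {lam : ℝ} (hlam : 0 ≤ lam) (s : Finset ι)
    (X : ι → m → 𝕜) :
    (lam • (1 : Matrix m m 𝕜) + ∑ i ∈ s, vecMulVec (X i) (star (X i))).PosSemidef :=
  (PosSemidef.one.smul hlam).add (posSemidef_sum s fun i _ ↦ posSemidef_vecMulVec_self_star (X i))

variable [Fintype m]

theorem re_det_le_re_trace_div_card_pow {A : Matrix m m 𝕜} (hA : A.PosSemidef) :
    re A.det ≤ (re A.trace / Fintype.card m) ^ Fintype.card m := by
  have det_eq : re A.det = ∏ i, hA.isHermitian.eigenvalues i := by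
    rw [hA.isHermitian.det_eq_prod_eigenvalues, ← ofReal_prod, ofReal_re]
  have trace_eq : re A.trace = ∑ i, hA.isHermitian.eigenvalues i := by
    rw [hA.isHermitian.trace_eq_sum_eigenvalues, ← ofReal_sum, ofReal_re]
  rw [det_eq, trace_eq]
  exact prod_le_sum_div_card_pow univ fun i _ ↦ hA.eigenvalues_nonneg i

theorem re_trace_smul_one_add_sum_vecMulVec (lam : ℝ) (s : Finset ι)
    (X : ι → EuclideanSpace 𝕜 m) :
    re (lam • (1 : Matrix m m 𝕜) + ∑ i ∈ s, vecMulVec (X i) (star (X i))).trace =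
      lam * Fintype.card m + ∑ i ∈ s, ‖X i‖ ^ 2 := by
  have re_dotProduct (x : EuclideanSpace 𝕜 m) : re (x ⬝ᵥ star x) = ‖x‖ ^ 2 := by
    rw [← EuclideanSpace.inner_eq_star_dotProduct, inner_self_eq_norm_sq]
  simp [trace_sum, trace_vecMulVec, re_dotProduct, smul_re]

theorem re_det_smul_one_add_sum_vecMulVec_le {lam : ℝ} (hlam : 0 ≤ lam) (s : Finset ι)
    (X : ι → EuclideanSpace 𝕜 m) :
    re (lam • (1 : Matrix m m 𝕜) + ∑ i ∈ s, vecMulVec (X i) (star (X i))).det ≤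
      (lam + (∑ i ∈ s, ‖X i‖ ^ 2) / Fintype.card m) ^ Fintype.card m := by
  obtain hm | hm := isEmpty_or_nonempty m
  · simp
  have card_ne_zero : (Fintype.card m : ℝ) ≠ 0 := by simp
  have det_le := re_det_le_re_trace_div_card_pow
    (posSemidef_smul_one_add_sum_vecMulVec hlam s fun i ↦ (X i : m → 𝕜))
  rwa [re_trace_smul_one_add_sum_vecMulVec, add_div, mul_div_cancel_right₀ _ card_ne_zero]
    at det_le

theorem stmt_1_general {L lam : ℝ} (hlam : 0 ≤ lam) (s : Finset ι)
    (X : ι → EuclideanSpace 𝕜 m) (hX : ∀ i ∈ s, ‖X i‖ ≤ L) :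
    re (lam • (1 : Matrix m m 𝕜) + ∑ i ∈ s, vecMulVec (X i) (star (X i))).det ≤
      (lam + #s * L ^ 2 / Fintype.card m) ^ Fintype.card m := by
  have sum_norm_sq_le : ∑ i ∈ s, ‖X i‖ ^ 2 ≤ #s * L ^ 2 := by
    rw [← nsmul_eq_mul]
    exact sum_le_card_nsmul s _ _ fun i hi ↦ pow_le_pow_left₀ (norm_nonneg _) (hX i hi) 2
  exact (re_det_smul_one_add_sum_vecMulVec_le hlam s X).trans (by gcongr)

end RCLike

/-- **Determinant–trace inequality.**
Let `X₁, …, Xₙ` be vectors in `ℝ^d` with `‖Xᵢ‖₂ ≤ L` for all `i`, and let `λ > 0`.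
With `Γ := λ I + ∑ᵢ Xᵢ Xᵢᵀ`, we have `det Γ ≤ (λ + n L² / d)^d`. -/
theorem stmt_1 {d n : ℕ} (hd : 0 < d) (L lam : ℝ) (hlam : 0 < lam)
    (X : Fin n → (Fin d → ℝ))
    (hX : ∀ i, Real.sqrt (X i ⬝ᵥ X i) ≤ L)
    (Γ : Matrix (Fin d) (Fin d) ℝ)
    (hΓ : Γ = lam • (1 : Matrix (Fin d) (Fin d) ℝ) +
      ∑ i : Fin n, vecMulVec (X i) (X i)) :
    Γ.det ≤ (lam + n * L ^ 2 / d) ^ d := by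
  have norm_le (i : Fin n) : ‖WithLp.toLp 2 (X i)‖ ≤ L := by
    simpa [EuclideanSpace.norm_eq, dotProduct, sq] using hX i
  simpa [hΓ] using stmt_1_general hlam.le univ (fun i ↦ WithLp.toLp 2 (X i)) fun i _ ↦ norm_le i
end

section
/- Let {F_t}_{t=1}^T be a filtration and {(Z_t, ζ_t)}_{t=1}^T a stochastic process with Z_t ∈ ℝ^d and ζ_t ∈ ℝ such that: (1) (Z_t, ζ_t) is F_t-measurable; (2) |ζ_t| ≤ M almost surely for all t ∈ [T]; (3) Z_t and ζ_t are conditionally independent given F_t; (4) E[Z_t | F_t] = 0; and (5) for every x ∈ ℝ^d, the conditional law of ⟨x, Z_t⟩ given F_t equals the conditional law of −⟨x, Z_t⟩ given F_t (Z_t is conditionally symmetric). Let Σ := Σ_{t=1}^T Z_t Z_tᵀ. Then for any positive definite d×d matrix Q and any δ ∈ (0,1), the probability that ‖Σ_{t=1}^T Z_t ζ_t‖²_{(Q + M²Σ)⁻¹} ≥ 2 log((1/δ)·√(det(Q + M²Σ)/det(Q))) is at most δ. -/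
open MeasureTheory ProbabilityTheory Matrix Finset

/-!
For a direction `x`, the variable `Y t = ζ t * ⟨x, Z t⟩` inherits conditional symmetry from `Z t`
through the conditional independence. Symmetrizing and using `cosh y ≤ exp (y ^ 2 / 2)`,
`exp (Y t - Y t ^ 2 / 2)` has conditional mean at most one, so
`exp (⟨x, S⟩ - ⟨x, W x⟩ / 2)` has mean at most one for `S = ∑ t, ζ t • Z t` and
`W = ∑ t, ζ t ^ 2 • Z t (Z t)ᵀ`. Averaging over a centered Gaussian `x` with precision `Q` gives the
closed form `exp (‖S‖² / 2) * √(det Q / det (Q + W))`, the norm being that of `(Q + W)⁻¹`, and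
Markov's inequality bounds its tail. The Gaussian average is visibly decreasing in `W`, so `W` may
finally be replaced by the larger `M ^ 2 • ∑ t, Z t (Z t)ᵀ`.
-/

section CondIdentDistrib

variable {Ω α β : Type*} {m m0 : MeasurableSpace Ω} [MeasurableSpace α] [MeasurableSpace β]

/-- `f` and `g` have the same conditional law given `m`: they are identically distributed on every
`m`-measurable event. This avoids conditional kernels, so no standard Borel assumption is made. -/
def CondIdentDistrib (m : MeasurableSpace Ω) {m0 : MeasurableSpace Ω} (f g : Ω → α)
    (μ : Measure[m0] Ω) : Prop :=
  ∀ s, MeasurableSet[m] s → IdentDistrib f g (μ.restrict s) (μ.restrict s)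

variable {μ : Measure Ω} {f g : Ω → α}

lemma setIntegral_condExp_indicator_one [IsFiniteMeasure μ] (hm : m ≤ m0) {s t : Set Ω}
    (hs : MeasurableSet[m] s) (ht : MeasurableSet t) :
    ∫ ω in s, (μ⟦t | m⟧) ω ∂μ = μ.real (t ∩ s) := by
  rw [setIntegral_condExp hm ((integrable_const 1).indicator ht) hs, integral_indicator ht]
  simp [measureReal_restrict_apply, ht]

lemma condIdentDistrib_iff_condExp_preimage [IsFiniteMeasure μ] (hm : m ≤ m0)
    (hf : Measurable f) (hg : Measurable g) :
    CondIdentDistrib m f g μ ↔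
      ∀ B, MeasurableSet B → μ⟦f ⁻¹' B | m⟧ =ᵐ[μ] μ⟦g ⁻¹' B | m⟧ := by
  refine ⟨fun h B hB => ?_, fun h s hs => ⟨hf.aemeasurable, hg.aemeasurable, ?_⟩⟩
  · refine ae_eq_condExp_of_forall_setIntegral_eq hm
      ((integrable_const 1).indicator (hg hB)) (fun _ _ _ => integrable_condExp.integrableOn)
      (fun s hs _ => ?_) stronglyMeasurable_condExp.aestronglyMeasurable
    rw [setIntegral_condExp_indicator_one hm hs (hf hB),
      ← setIntegral_condExp hm ((integrable_const 1).indicator (hg hB)) hs,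
      setIntegral_condExp_indicator_one hm hs (hg hB), ← measureReal_restrict_apply (hf hB),
      ← measureReal_restrict_apply (hg hB), measureReal_def, measureReal_def,
      (h s hs).measure_mem_eq hB]
  · ext B hB
    rw [Measure.map_apply hf hB, Measure.map_apply hg hB, Measure.restrict_apply (hf hB),
      Measure.restrict_apply (hg hB), ← measureReal_eq_measureReal_iff,
      ← setIntegral_condExp_indicator_one hm hs (hf hB),
      ← setIntegral_condExp_indicator_one hm hs (hg hB)]
    exact integral_congr_ae (ae_restrict_of_ae (h B hB))

lemma measureReal_inter_inter_of_condIndepFun [StandardBorelSpace Ω] [IsFiniteMeasure μ]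
    {hm : m ≤ m0} {h : Ω → β} (hf : Measurable f) (hh : Measurable h)
    (hfh : CondIndepFun m hm f h μ) {B : Set α} {C : Set β} {s : Set Ω}
    (hB : MeasurableSet B) (hC : MeasurableSet C) (hs : MeasurableSet[m] s) :
    μ.real (f ⁻¹' B ∩ h ⁻¹' C ∩ s) = ∫ ω in s, (μ⟦f ⁻¹' B | m⟧) ω * (μ⟦h ⁻¹' C | m⟧) ω ∂μ := by
  rw [← setIntegral_condExp_indicator_one hm hs ((hf hB).inter (hh hC))]
  exact integral_congr_ae (ae_restrict_of_ae
    ((condIndepFun_iff_condExp_inter_preimage_eq_mul hf hh).1 hfh B C hB hC))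

lemma CondIdentDistrib.comp (hfg : CondIdentDistrib m f g μ) {u : α → β} (hu : Measurable u) :
    CondIdentDistrib m (u ∘ f) (u ∘ g) μ :=
  fun s hs => (hfg s hs).comp hu

lemma CondIdentDistrib.prodMk_of_condIndepFun [StandardBorelSpace Ω] [IsFiniteMeasure μ]
    {hm : m ≤ m0} {h : Ω → β} (hf : Measurable f) (hg : Measurable g) (hh : Measurable h)
    (hfg : CondIdentDistrib m f g μ) (hfh : CondIndepFun m hm f h μ)
    (hgh : CondIndepFun m hm g h μ) :
    CondIdentDistrib m (fun ω => (f ω, h ω)) (fun ω => (g ω, h ω)) μ := by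
  refine fun s hs => ⟨by fun_prop, by fun_prop, Measure.ext_prod fun {B C} hB hC => ?_⟩
  rw [Measure.map_apply (hf.prodMk hh) (hB.prod hC), Measure.map_apply (hg.prodMk hh) (hB.prod hC),
    Measure.restrict_apply (hf.prodMk hh (hB.prod hC)),
    Measure.restrict_apply (hg.prodMk hh (hB.prod hC)), ← measureReal_eq_measureReal_iff,
    Set.mk_preimage_prod, Set.mk_preimage_prod,
    measureReal_inter_inter_of_condIndepFun hf hh hfh hB hC hs,
    measureReal_inter_inter_of_condIndepFun hg hh hgh hB hC hs]
  refine integral_congr_ae (ae_restrict_of_ae ?_)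
  filter_upwards [(condIdentDistrib_iff_condExp_preimage hm hf hg).1 hfg B hB] with ω hω
  rw [hω]

lemma CondIdentDistrib.neg_mul_of_condIndepFun [StandardBorelSpace Ω] [IsFiniteMeasure μ]
    {hm : m ≤ m0} {U ζ : Ω → ℝ} (hU : Measurable U) (hζ : Measurable ζ)
    (hsymm : CondIdentDistrib m U (fun ω => -U ω) μ) (hind : CondIndepFun m hm U ζ μ) :
    CondIdentDistrib m (fun ω => ζ ω * U ω) (fun ω => -(ζ ω * U ω)) μ := by
  have hpair := hsymm.prodMk_of_condIndepFun hU hU.neg hζ hind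
    (hind.comp measurable_neg measurable_id)
  simpa [Function.comp_def] using hpair.comp (measurable_snd.mul measurable_fst)

lemma CondIdentDistrib.identDistrib_prodMk [IsFiniteMeasure μ] (hm : m ≤ m0)
    (hfg : CondIdentDistrib m f g μ) {D : Ω → β} (hD : Measurable[m] D) :
    IdentDistrib (fun ω => (f ω, D ω)) (fun ω => (g ω, D ω)) μ μ := by
  have hD0 : Measurable D := hD.mono hm le_rfl
  have hf : AEMeasurable f μ := by simpa using (hfg .univ .univ).aemeasurable_fst
  have hg : AEMeasurable g μ := by simpa using (hfg .univ .univ).aemeasurable_snd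
  refine ⟨by fun_prop, by fun_prop, Measure.ext_prod fun {B C} hB hC => ?_⟩
  have hs := (hfg _ (hD hC)).measure_mem_eq hB
  rw [Measure.restrict_apply' (hD0 hC), Measure.restrict_apply' (hD0 hC)] at hs
  rwa [Measure.map_apply_of_aemeasurable (by fun_prop) (hB.prod hC),
    Measure.map_apply_of_aemeasurable (by fun_prop) (hB.prod hC)]

end CondIdentDistrib

section ConditionallySymmetric

variable {Ω : Type*} {m m0 : MeasurableSpace Ω} {μ : Measure Ω}

lemma exp_sub_half_sq_add_exp_neg_sub_half_sq_le_two (y : ℝ) :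
    Real.exp (y - y ^ 2 / 2) + Real.exp (-y - y ^ 2 / 2) ≤ 2 := by
  calc Real.exp (y - y ^ 2 / 2) + Real.exp (-y - y ^ 2 / 2)
      = 2 * (Real.cosh y / Real.exp (y ^ 2 / 2)) := by
        rw [Real.cosh_eq, Real.exp_sub, Real.exp_sub]
        ring
    _ ≤ 2 * 1 := by
        gcongr
        exact div_le_one_of_le₀ (Real.cosh_le_exp_half_sq y) (Real.exp_nonneg _)
    _ = 2 := mul_one 2

lemma lintegral_exp_sub_half_sq_mul_le [IsFiniteMeasure μ] (hm : m ≤ m0) {Y : Ω → ℝ}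
    (hY : Measurable Y) (hsymm : CondIdentDistrib m Y (fun ω => -Y ω) μ) {D : Ω → ENNReal}
    (hD : Measurable[m] D) :
    ∫⁻ ω, ENNReal.ofReal (Real.exp (Y ω - Y ω ^ 2 / 2)) * D ω ∂μ ≤ ∫⁻ ω, D ω ∂μ := by
  have hD0 : Measurable D := hD.mono hm le_rfl
  have hflip : ∫⁻ ω, ENNReal.ofReal (Real.exp (Y ω - Y ω ^ 2 / 2)) * D ω ∂μ =
      ∫⁻ ω, ENNReal.ofReal (Real.exp (-Y ω - Y ω ^ 2 / 2)) * D ω ∂μ := by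
    have hu : Measurable fun p : ℝ × ENNReal =>
      ENNReal.ofReal (Real.exp (p.1 - p.1 ^ 2 / 2)) * p.2 := by fun_prop
    simpa [Function.comp_def] using ((hsymm.identDistrib_prodMk hm hD).comp hu).lintegral_eq
  refine (ENNReal.mul_le_mul_iff_right two_ne_zero ENNReal.ofNat_ne_top).1 ?_
  calc 2 * ∫⁻ ω, ENNReal.ofReal (Real.exp (Y ω - Y ω ^ 2 / 2)) * D ω ∂μ
      = ∫⁻ ω, ENNReal.ofReal (Real.exp (Y ω - Y ω ^ 2 / 2)) * D ω +
          ENNReal.ofReal (Real.exp (-Y ω - Y ω ^ 2 / 2)) * D ω ∂μ := by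
        rw [lintegral_add_left (by fun_prop), ← hflip, two_mul]
    _ ≤ ∫⁻ ω, 2 * D ω ∂μ := by
        gcongr with ω
        rw [← add_mul, ← ENNReal.ofReal_add (Real.exp_nonneg _) (Real.exp_nonneg _)]
        gcongr
        exact ENNReal.ofReal_le_of_le_toReal
          (exp_sub_half_sq_add_exp_neg_sub_half_sq_le_two (Y ω))
    _ = 2 * ∫⁻ ω, D ω ∂μ := lintegral_const_mul _ hD0

lemma lintegral_exp_sum_sub_half_sq_le [IsFiniteMeasure μ] (ℱ : Filtration ℕ m0) {Y : ℕ → Ω → ℝ}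
    (hY : ∀ t, Measurable[ℱ (t + 1)] (Y t))
    (hsymm : ∀ t, CondIdentDistrib (ℱ t) (Y t) (fun ω => -Y t ω) μ) (n : ℕ) :
    ∫⁻ ω, ENNReal.ofReal (Real.exp (∑ t ∈ range n, (Y t ω - Y t ω ^ 2 / 2))) ∂μ ≤
      μ Set.univ := by
  induction n with
  | zero => simp
  | succ n ih =>
    have hpast : Measurable[ℱ n] fun ω =>
        ENNReal.ofReal (Real.exp (∑ t ∈ range n, (Y t ω - Y t ω ^ 2 / 2))) := by
      refine ENNReal.measurable_ofReal.comp (Real.measurable_exp.comp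
        (Finset.measurable_fun_sum _ fun t ht => ?_))
      have hYt := (hY t).mono (ℱ.mono (Finset.mem_range.1 ht)) le_rfl
      exact hYt.sub ((hYt.pow_const 2).div_const 2)
    simp_rw [sum_range_succ_comm, Real.exp_add, ENNReal.ofReal_mul (Real.exp_nonneg _)]
    exact (lintegral_exp_sub_half_sq_mul_le (ℱ.le n) ((hY n).mono (ℱ.le _) le_rfl) (hsymm n)
      hpast).trans ih

end ConditionallySymmetric

section GaussianMixture

variable {ι : Type*} [Fintype ι]

lemma lintegral_exp_neg_half_dotProduct_self :
    ∫⁻ x : ι → ℝ, ENNReal.ofReal (Real.exp (-(x ⬝ᵥ x) / 2)) =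
      ENNReal.ofReal (√(2 * Real.pi) ^ Fintype.card ι) := by
  have hprod : ∀ x : ι → ℝ, Real.exp (-(x ⬝ᵥ x) / 2) = ∏ i, Real.exp (-(1 / 2) * x i ^ 2) :=
    fun x => by
      rw [← Real.exp_sum, ← mul_sum, dotProduct]
      simp_rw [pow_two]
      ring_nf
  have hint : Integrable fun x : ι → ℝ => ∏ i, Real.exp (-(1 / 2) * x i ^ 2) :=
    Integrable.fintype_prod fun _ => integrable_exp_neg_mul_sq (by norm_num)
  simp_rw [hprod]
  rw [← ofReal_integral_eq_lintegral_ofReal hint (.of_forall fun x => by positivity),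
    integral_fintype_prod_volume_eq_pow fun y : ℝ => Real.exp (-(1 / 2) * y ^ 2),
    integral_gaussian, div_div_eq_mul_div, div_one, mul_comm]

variable [DecidableEq ι] {Q V W W' : Matrix ι ι ℝ}

lemma lintegral_exp_neg_half_dotProduct_mulVec (hV : V.PosDef) :
    ∫⁻ x : ι → ℝ, ENNReal.ofReal (Real.exp (-(x ⬝ᵥ V *ᵥ x) / 2)) =
      ENNReal.ofReal (√(2 * Real.pi) ^ Fintype.card ι / √V.det) := by
  obtain ⟨B, rfl⟩ : ∃ B : Matrix ι ι ℝ, V = Bᴴ * B := by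
    open scoped MatrixOrder in
    exact CStarAlgebra.nonneg_iff_eq_star_mul_self.mp hV.posSemidef.nonneg
  have hdet : (Bᴴ * B).det = B.det ^ 2 := by simp [pow_two]
  have hB : B.det ≠ 0 := fun h => hV.det_pos.ne' (by simp [h])
  have hmeas : Measurable fun x : ι → ℝ => ENNReal.ofReal (Real.exp (-(x ⬝ᵥ x) / 2)) := by
    unfold dotProduct
    fun_prop
  calc ∫⁻ x : ι → ℝ, ENNReal.ofReal (Real.exp (-(x ⬝ᵥ (Bᴴ * B) *ᵥ x) / 2))
      = ∫⁻ x, ENNReal.ofReal (Real.exp (-(x ⬝ᵥ x) / 2)) ∂(volume.map (toLin' B)) := by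
        rw [lintegral_map hmeas (by fun_prop)]
        simp_rw [toLin'_apply, dotProduct_mulVec, ← vecMul_vecMul,
          conjTranspose_eq_transpose_of_trivial, vecMul_transpose]
    _ = ENNReal.ofReal (√(2 * Real.pi) ^ Fintype.card ι / √(Bᴴ * B).det) := by
        rw [Real.map_matrix_volume_pi_eq_smul_volume_pi hB, lintegral_smul_measure,
          lintegral_exp_neg_half_dotProduct_self, smul_eq_mul,
          ← ENNReal.ofReal_mul (abs_nonneg _), hdet, Real.sqrt_sq_eq_abs, abs_inv, div_eq_inv_mul]

lemma dotProduct_sub_half_quadratic_eq (hV : V.PosDef) (s x : ι → ℝ) :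
    x ⬝ᵥ s - (x ⬝ᵥ V *ᵥ x) / 2 =
      (s ⬝ᵥ V⁻¹ *ᵥ s) / 2 + -((x - V⁻¹ *ᵥ s) ⬝ᵥ V *ᵥ (x - V⁻¹ *ᵥ s)) / 2 := by
  have hmul : V *ᵥ (V⁻¹ *ᵥ s) = s := by
    rw [mulVec_mulVec, mul_nonsing_inv _ hV.det_pos.ne'.isUnit, one_mulVec]
  have hcross : (V⁻¹ *ᵥ s) ⬝ᵥ V *ᵥ x = x ⬝ᵥ s := by
    have hT : Vᵀ = V := by simpa using hV.isHermitian.eq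
    rw [dotProduct_mulVec, ← mulVec_transpose, hT, hmul, dotProduct_comm]
  rw [mulVec_sub, hmul, sub_dotProduct, dotProduct_sub, dotProduct_sub, hcross,
    dotProduct_comm (V⁻¹ *ᵥ s) s]
  ring

/-- The density of the centered Gaussian measure with precision matrix (inverse covariance) `Q`. -/
noncomputable def precisionGaussianPDF (Q : Matrix ι ι ℝ) (x : ι → ℝ) : ENNReal :=
  ENNReal.ofReal (√Q.det / √(2 * Real.pi) ^ Fintype.card ι * Real.exp (-(x ⬝ᵥ Q *ᵥ x) / 2))

@[fun_prop]
lemma measurable_precisionGaussianPDF (Q : Matrix ι ι ℝ) :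
    Measurable (precisionGaussianPDF Q) := by
  unfold precisionGaussianPDF dotProduct mulVec dotProduct
  fun_prop

lemma lintegral_precisionGaussianPDF_eq_one (hQ : Q.PosDef) :
    ∫⁻ x, precisionGaussianPDF Q x = 1 := by
  have hdet := Real.sqrt_pos.2 hQ.det_pos
  have hconst : 0 ≤ √Q.det / √(2 * Real.pi) ^ Fintype.card ι := by positivity
  simp_rw [precisionGaussianPDF, ENNReal.ofReal_mul hconst]
  rw [lintegral_const_mul' _ _ ENNReal.ofReal_ne_top,
    lintegral_exp_neg_half_dotProduct_mulVec hQ, ← ENNReal.ofReal_mul hconst,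
    div_mul_div_cancel₀ (by positivity), div_self hdet.ne', ENNReal.ofReal_one]

/-- The mean of `x ↦ exp (⟨x, s⟩ - ⟨x, W x⟩ / 2)` under the centered Gaussian measure with precision
matrix `Q`, given by its closed form. In the method of mixtures, `s` is the current value of a
vector-valued process and `W` its accumulated quadratic variation. -/
noncomputable def gaussianMixture (Q W : Matrix ι ι ℝ) (s : ι → ℝ) : ℝ :=
  Real.exp ((s ⬝ᵥ (Q + W)⁻¹ *ᵥ s) / 2) * √(Q.det / (Q + W).det)

lemma lintegral_precisionGaussianPDF_mul_exp (hQ : Q.PosDef) (hW : W.PosSemidef) (s : ι → ℝ) :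
    ∫⁻ x, precisionGaussianPDF Q x *
        ENNReal.ofReal (Real.exp (x ⬝ᵥ s - (x ⬝ᵥ W *ᵥ x) / 2)) =
      ENNReal.ofReal (gaussianMixture Q W s) := by
  set V := Q + W with hV_def
  have hV : V.PosDef := hQ.add_posSemidef hW
  set c := √Q.det / √(2 * Real.pi) ^ Fintype.card ι * Real.exp ((s ⬝ᵥ V⁻¹ *ᵥ s) / 2) with hc_def
  have hc : 0 ≤ c := by positivity
  have hsquare : ∀ x, precisionGaussianPDF Q x *
      ENNReal.ofReal (Real.exp (x ⬝ᵥ s - (x ⬝ᵥ W *ᵥ x) / 2)) =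
        ENNReal.ofReal c * ENNReal.ofReal
          (Real.exp (-((x - V⁻¹ *ᵥ s) ⬝ᵥ V *ᵥ (x - V⁻¹ *ᵥ s)) / 2)) := fun x => by
    have hsum : -(x ⬝ᵥ Q *ᵥ x) / 2 + (x ⬝ᵥ s - (x ⬝ᵥ W *ᵥ x) / 2) =
        (s ⬝ᵥ V⁻¹ *ᵥ s) / 2 + -((x - V⁻¹ *ᵥ s) ⬝ᵥ V *ᵥ (x - V⁻¹ *ᵥ s)) / 2 := by
      rw [← dotProduct_sub_half_quadratic_eq hV, hV_def, add_mulVec, dotProduct_add]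
      ring
    rw [precisionGaussianPDF, ← ENNReal.ofReal_mul (by positivity), ← ENNReal.ofReal_mul hc,
      mul_assoc, ← Real.exp_add, hsum, Real.exp_add, ← mul_assoc]
  simp_rw [hsquare]
  rw [lintegral_const_mul' _ _ ENNReal.ofReal_ne_top,
    lintegral_sub_right_eq_self
      (fun x : ι → ℝ => ENNReal.ofReal (Real.exp (-(x ⬝ᵥ V *ᵥ x) / 2))) (V⁻¹ *ᵥ s),
    lintegral_exp_neg_half_dotProduct_mulVec hV, ← ENNReal.ofReal_mul hc, gaussianMixture,
    ← hV_def, Real.sqrt_div hQ.det_pos.le, hc_def]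
  congr 1
  field_simp

lemma gaussianMixture_anti (hQ : Q.PosDef) (hW : W.PosSemidef) (hWW' : (W' - W).PosSemidef)
    (s : ι → ℝ) : gaussianMixture Q W' s ≤ gaussianMixture Q W s := by
  have hW' : W'.PosSemidef := by simpa using hW.add hWW'
  rw [← ENNReal.ofReal_le_ofReal_iff (by unfold gaussianMixture; positivity),
    ← lintegral_precisionGaussianPDF_mul_exp hQ hW',
    ← lintegral_precisionGaussianPDF_mul_exp hQ hW]
  gcongr with x
  have hx : 0 ≤ x ⬝ᵥ (W' - W) *ᵥ x := hWW'.dotProduct_mulVec_nonneg x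
  rw [sub_mulVec, dotProduct_sub] at hx
  linarith

lemma two_mul_log_le_iff_inv_le_gaussianMixture (hQ : Q.PosDef) (hW : W.PosSemidef) {δ : ℝ}
    (hδ : 0 < δ) (s : ι → ℝ) :
    2 * Real.log ((1 / δ) * √((Q + W).det / Q.det)) ≤ s ⬝ᵥ (Q + W)⁻¹ *ᵥ s ↔
      δ⁻¹ ≤ gaussianMixture Q W s := by
  have hratio : 0 < √((Q + W).det / Q.det) :=
    Real.sqrt_pos.2 (div_pos (hQ.add_posSemidef hW).det_pos hQ.det_pos)
  rw [gaussianMixture, ← inv_div (Q + W).det, Real.sqrt_inv, ← div_eq_mul_inv,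
    le_div_iff₀ hratio, ← Real.log_le_iff_le_exp (by positivity), le_div_iff₀' two_pos, one_div]

end GaussianMixture

section SumVecMulVec

variable {ι κ : Type*}

lemma posSemidef_sum_smul_vecMulVec_self [Finite ι] (s : Finset κ) {c : κ → ℝ}
    (hc : ∀ t ∈ s, 0 ≤ c t) (Y : κ → ι → ℝ) : (∑ t ∈ s, c t • vecMulVec (Y t) (Y t)).PosSemidef :=
  posSemidef_sum s fun t ht => by
    simpa using (posSemidef_vecMulVec_self_star (Y t)).smul (hc t ht)

lemma posSemidef_sum_vecMulVec_self [Finite ι] (s : Finset κ) (Y : κ → ι → ℝ) :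
    (∑ t ∈ s, vecMulVec (Y t) (Y t)).PosSemidef := by
  simpa using posSemidef_sum_smul_vecMulVec_self s (fun _ _ => zero_le_one) Y

lemma posSemidef_sum_sub_sum_vecMulVec_smul [Finite ι] (s : Finset κ) {M ζ : κ → ℝ}
    (hM : ∀ t ∈ s, |ζ t| ≤ M t) (Z : κ → ι → ℝ) :
    (∑ t ∈ s, M t ^ 2 • vecMulVec (Z t) (Z t) -
      ∑ t ∈ s, vecMulVec (ζ t • Z t) (ζ t • Z t)).PosSemidef := by
  have hdiff : ∑ t ∈ s, M t ^ 2 • vecMulVec (Z t) (Z t) -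
      ∑ t ∈ s, vecMulVec (ζ t • Z t) (ζ t • Z t) =
        ∑ t ∈ s, (M t ^ 2 - ζ t ^ 2) • vecMulVec (Z t) (Z t) := by
    simp_rw [smul_vecMulVec, vecMulVec_smul, smul_smul, ← pow_two, sub_smul, sum_sub_distrib]
  rw [hdiff]
  exact posSemidef_sum_smul_vecMulVec_self s
    (fun t ht => sub_nonneg.2 (sq_le_sq.2 ((hM t ht).trans (le_abs_self _)))) Z

variable [Fintype ι]

lemma dotProduct_sum_sub_half_quadratic_sum_vecMulVec (s : Finset κ) (Y : κ → ι → ℝ) (x : ι → ℝ) :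
    x ⬝ᵥ ∑ t ∈ s, Y t - (x ⬝ᵥ (∑ t ∈ s, vecMulVec (Y t) (Y t)) *ᵥ x) / 2 =
      ∑ t ∈ s, (x ⬝ᵥ Y t - (x ⬝ᵥ Y t) ^ 2 / 2) := by
  rw [sum_mulVec, dotProduct_sum, dotProduct_sum, sum_sub_distrib, sum_div]
  simp_rw [vecMulVec_mulVec, op_smul_eq_smul, dotProduct_smul, smul_eq_mul, pow_two,
    dotProduct_comm (Y _) x]

lemma measurable_dotProduct_right (x : ι → ℝ) : Measurable fun y : ι → ℝ => x ⬝ᵥ y := by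
  unfold dotProduct
  fun_prop

end SumVecMulVec

section SelfNormalized

variable {Ω ι : Type*} [Fintype ι] [DecidableEq ι] {m0 : MeasurableSpace Ω} {μ : Measure Ω}
  {Q : Matrix ι ι ℝ} {S : Ω → ι → ℝ} {W : Ω → Matrix ι ι ℝ}

lemma measurable_precisionGaussianPDF_mul_exp (hS : Measurable S)
    (hW : ∀ i j, Measurable fun ω => W ω i j) (Q : Matrix ι ι ℝ) :
    Measurable fun p : Ω × (ι → ℝ) => precisionGaussianPDF Q p.2 *
      ENNReal.ofReal (Real.exp (p.2 ⬝ᵥ S p.1 - (p.2 ⬝ᵥ W p.1 *ᵥ p.2) / 2)) := by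
  simp only [dotProduct, mulVec]
  fun_prop

lemma measurable_ofReal_gaussianMixture (hS : Measurable S)
    (hW : ∀ i j, Measurable fun ω => W ω i j) (hWpos : ∀ ω, (W ω).PosSemidef) (hQ : Q.PosDef) :
    Measurable fun ω => ENNReal.ofReal (gaussianMixture Q (W ω) (S ω)) := by
  simp_rw [← lintegral_precisionGaussianPDF_mul_exp hQ (hWpos _)]
  exact (measurable_precisionGaussianPDF_mul_exp hS hW Q).lintegral_prod_right'

lemma lintegral_gaussianMixture_le [SFinite μ] (hS : Measurable S)
    (hW : ∀ i j, Measurable fun ω => W ω i j) (hWpos : ∀ ω, (W ω).PosSemidef) {C : ENNReal}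
    (hexp : ∀ x : ι → ℝ,
      ∫⁻ ω, ENNReal.ofReal (Real.exp (x ⬝ᵥ S ω - (x ⬝ᵥ W ω *ᵥ x) / 2)) ∂μ ≤ C)
    (hQ : Q.PosDef) :
    ∫⁻ ω, ENNReal.ofReal (gaussianMixture Q (W ω) (S ω)) ∂μ ≤ C := by
  calc ∫⁻ ω, ENNReal.ofReal (gaussianMixture Q (W ω) (S ω)) ∂μ
      = ∫⁻ ω, ∫⁻ x, precisionGaussianPDF Q x *
          ENNReal.ofReal (Real.exp (x ⬝ᵥ S ω - (x ⬝ᵥ W ω *ᵥ x) / 2)) ∂volume ∂μ :=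
        lintegral_congr fun ω => (lintegral_precisionGaussianPDF_mul_exp hQ (hWpos ω) (S ω)).symm
    _ = ∫⁻ x, ∫⁻ ω, precisionGaussianPDF Q x *
          ENNReal.ofReal (Real.exp (x ⬝ᵥ S ω - (x ⬝ᵥ W ω *ᵥ x) / 2)) ∂μ :=
        lintegral_lintegral_swap (measurable_precisionGaussianPDF_mul_exp hS hW Q).aemeasurable
    _ ≤ ∫⁻ x, precisionGaussianPDF Q x * C := by
        refine lintegral_mono fun x => ?_
        rw [lintegral_const_mul' (precisionGaussianPDF Q x) _ ENNReal.ofReal_ne_top]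
        gcongr
        exact hexp x
    _ = C := by
        rw [lintegral_mul_const _ (measurable_precisionGaussianPDF Q),
          lintegral_precisionGaussianPDF_eq_one hQ, one_mul]

lemma measure_two_mul_log_le_le [SFinite μ] (hS : Measurable S)
    (hW : ∀ i j, Measurable fun ω => W ω i j) (hWpos : ∀ ω, (W ω).PosSemidef) {C : ENNReal}
    (hexp : ∀ x : ι → ℝ,
      ∫⁻ ω, ENNReal.ofReal (Real.exp (x ⬝ᵥ S ω - (x ⬝ᵥ W ω *ᵥ x) / 2)) ∂μ ≤ C)
    (hQ : Q.PosDef) {δ : ℝ} (hδ : 0 < δ) :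
    μ {ω | 2 * Real.log ((1 / δ) * √((Q + W ω).det / Q.det)) ≤
      S ω ⬝ᵥ (Q + W ω)⁻¹ *ᵥ S ω} ≤ ENNReal.ofReal δ * C := by
  calc μ {ω | 2 * Real.log ((1 / δ) * √((Q + W ω).det / Q.det)) ≤
        S ω ⬝ᵥ (Q + W ω)⁻¹ *ᵥ S ω}
      ≤ μ {ω | ENNReal.ofReal δ⁻¹ ≤ ENNReal.ofReal (gaussianMixture Q (W ω) (S ω))} :=
        measure_mono fun ω hω => ENNReal.ofReal_le_ofReal
          ((two_mul_log_le_iff_inv_le_gaussianMixture hQ (hWpos ω) hδ (S ω)).1 hω)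
    _ ≤ (∫⁻ ω, ENNReal.ofReal (gaussianMixture Q (W ω) (S ω)) ∂μ) / ENNReal.ofReal δ⁻¹ :=
        meas_ge_le_lintegral_div (measurable_ofReal_gaussianMixture hS hW hWpos hQ).aemeasurable
          (by simpa using hδ) ENNReal.ofReal_ne_top
    _ ≤ C / ENNReal.ofReal δ⁻¹ := by
        gcongr
        exact lintegral_gaussianMixture_le hS hW hWpos hexp hQ
    _ = ENNReal.ofReal δ * C := by
        rw [ENNReal.ofReal_inv_of_pos hδ, div_eq_mul_inv, inv_inv, mul_comm]

theorem measure_two_mul_log_le_le_of_condIdentDistrib_neg [IsFiniteMeasure μ]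
    (ℱ : Filtration ℕ m0) {Y : ℕ → Ω → ι → ℝ} (hY : ∀ t, Measurable[ℱ (t + 1)] (Y t))
    (hsymm : ∀ t x, CondIdentDistrib (ℱ t) (fun ω => x ⬝ᵥ Y t ω) (fun ω => -(x ⬝ᵥ Y t ω)) μ)
    (hQ : Q.PosDef) {δ : ℝ} (hδ : 0 < δ) (T : ℕ) :
    μ {ω | 2 * Real.log ((1 / δ) *
          √((Q + ∑ t ∈ range T, vecMulVec (Y t ω) (Y t ω)).det / Q.det)) ≤
        (∑ t ∈ range T, Y t ω) ⬝ᵥ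
          (Q + ∑ t ∈ range T, vecMulVec (Y t ω) (Y t ω))⁻¹ *ᵥ ∑ t ∈ range T, Y t ω} ≤
      ENNReal.ofReal δ * μ Set.univ := by
  have hY0 : ∀ t, Measurable (Y t) := fun t => (hY t).mono (ℱ.le _) le_rfl
  refine measure_two_mul_log_le_le (by fun_prop) (fun i j => ?_)
    (fun ω => posSemidef_sum_vecMulVec_self (range T) fun t => Y t ω) (fun x => ?_) hQ hδ
  · simp_rw [Matrix.sum_apply, vecMulVec_apply]
    fun_prop
  · simp_rw [dotProduct_sum_sub_half_quadratic_sum_vecMulVec]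
    exact lintegral_exp_sum_sub_half_sq_le ℱ
      (fun t => (measurable_dotProduct_right x).comp (hY t)) (fun t => hsymm t x) T

end SelfNormalized

theorem stmt_2_general {Ω ι : Type*} [Fintype ι] [DecidableEq ι] {m0 : MeasurableSpace Ω}
    [StandardBorelSpace Ω] (μ : Measure Ω) [IsFiniteMeasure μ] (ℱ : Filtration ℕ m0) (T : ℕ)
    (M : ℕ → Ω → ℝ) (Z : ℕ → Ω → ι → ℝ) (ζ : ℕ → Ω → ℝ)
    (hZ : ∀ t, Measurable[ℱ (t + 1)] (Z t)) (hζ : ∀ t, Measurable[ℱ (t + 1)] (ζ t))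
    (hM : ∀ t, ∀ᵐ ω ∂μ, |ζ t ω| ≤ M t ω)
    (hindep : ∀ t, CondIndepFun (ℱ t) (ℱ.le t) (Z t) (ζ t) μ)
    (hsymm : ∀ t x, CondIdentDistrib (ℱ t) (fun ω => x ⬝ᵥ Z t ω) (fun ω => -(x ⬝ᵥ Z t ω)) μ)
    (Q : Matrix ι ι ℝ) (hQ : Q.PosDef) (δ : ℝ) (hδ : 0 < δ) :
    μ {ω | 2 * Real.log ((1 / δ) *
          √((Q + ∑ t ∈ range T, M t ω ^ 2 • vecMulVec (Z t ω) (Z t ω)).det / Q.det)) ≤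
        (∑ t ∈ range T, ζ t ω • Z t ω) ⬝ᵥ
          (Q + ∑ t ∈ range T, M t ω ^ 2 • vecMulVec (Z t ω) (Z t ω))⁻¹ *ᵥ
            ∑ t ∈ range T, ζ t ω • Z t ω} ≤
      ENNReal.ofReal δ * μ Set.univ := by
  have hZ0 : ∀ t, Measurable (Z t) := fun t => (hZ t).mono (ℱ.le _) le_rfl
  have hζ0 : ∀ t, Measurable (ζ t) := fun t => (hζ t).mono (ℱ.le _) le_rfl
  have hprod : ∀ t x, CondIdentDistrib (ℱ t) (fun ω => x ⬝ᵥ ζ t ω • Z t ω)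
      (fun ω => -(x ⬝ᵥ ζ t ω • Z t ω)) μ := fun t x => by
    simp_rw [dotProduct_smul, smul_eq_mul]
    exact (hsymm t x).neg_mul_of_condIndepFun ((measurable_dotProduct_right x).comp (hZ0 t))
      (hζ0 t) ((hindep t).comp (measurable_dotProduct_right x) measurable_id)
  refine (measure_mono_ae ?_).trans (measure_two_mul_log_le_le_of_condIdentDistrib_neg ℱ
    (Y := fun t ω => ζ t ω • Z t ω) (fun t => (hζ t).smul (hZ t)) hprod hQ hδ T)
  filter_upwards [ae_all_iff.2 hM] with ω hω hlog
  have hW := posSemidef_sum_vecMulVec_self (range T) fun t => ζ t ω • Z t ω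
  have hW' := posSemidef_sum_smul_vecMulVec_self (range T) (fun t _ => sq_nonneg (M t ω))
    fun t => Z t ω
  have hmix := (two_mul_log_le_iff_inv_le_gaussianMixture hQ hW' hδ _).1 hlog
  exact (two_mul_log_le_iff_inv_le_gaussianMixture hQ hW hδ _).2 (hmix.trans
    (gaussianMixture_anti hQ hW
      (posSemidef_sum_sub_sum_vecMulVec_smul (range T) (fun t _ => hω t) fun t => Z t ω) _))

/-- **Symmetric self-normalized inequality (Lemma: self_normalized_symmetric).**
Let `{F_t}` be a filtration and `(Z_t, ζ_t)` a process with `Z_t ∈ ℝ^d`, `ζ_t ∈ ℝ`, each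
realized by time `t+1`, such that `|ζ_t| ≤ M` a.s., `Z_t ⟂ ζ_t | F_t`, `E[Z_t | F_t] = 0`,
and `Z_t` is conditionally symmetric given `F_t` (the conditional law of `⟨x, Z_t⟩` equals
that of `−⟨x, Z_t⟩`, encoded via bounded measurable test functions).  With
`Σ = ∑_{t=1}^T Z_t Z_tᵀ`, for any positive definite `Q` and `δ ∈ (0,1)`,
`P[ ‖∑_t Z_t ζ_t‖²_{(Q+M²Σ)⁻¹} ≥ 2 log((1/δ)√(det(Q+M²Σ)/det Q)) ] ≤ δ`. -/
theorem stmt_2 {Ω : Type*} {m0 : MeasurableSpace Ω} [StandardBorelSpace Ω] [Nonempty Ω]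
    (μ : Measure Ω) [IsProbabilityMeasure μ]
    (ℱ : Filtration ℕ m0)
    {d T : ℕ} (M : ℝ) (hM : 0 ≤ M)
    (Z : ℕ → Ω → (Fin d → ℝ)) (ζ : ℕ → Ω → ℝ)
    (hZadapted : ∀ t, Measurable[ℱ (t + 1)] (Z t))
    (hζadapted : ∀ t, Measurable[ℱ (t + 1)] (ζ t))
    (hζbd : ∀ t, ∀ᵐ ω ∂μ, |ζ t ω| ≤ M)
    (hindep : ∀ t, CondIndepFun (ℱ t) (ℱ.le t) (Z t) (ζ t) μ)
    (hcent : ∀ t, μ[Z t | ℱ t] =ᵐ[μ] 0)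
    (hsym : ∀ t, ∀ x : Fin d → ℝ, ∀ g : ℝ → ℝ, Measurable g → (∃ C, ∀ y, |g y| ≤ C) →
      μ[(fun ω => g (x ⬝ᵥ Z t ω)) | ℱ t] =ᵐ[μ] μ[(fun ω => g (-(x ⬝ᵥ Z t ω))) | ℱ t])
    (Q : Matrix (Fin d) (Fin d) ℝ) (hQ : Q.PosDef)
    (δ : ℝ) (hδ : 0 < δ) (hδ1 : δ < 1) :
    μ {ω |
        2 * Real.log ((1 / δ) * Real.sqrt
            ((Q + M ^ 2 • ∑ t ∈ Finset.range T, vecMulVec (Z t ω) (Z t ω)).det / Q.det)) ≤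
          (∑ t ∈ Finset.range T, ζ t ω • Z t ω) ⬝ᵥ
            (Q + M ^ 2 • ∑ t ∈ Finset.range T, vecMulVec (Z t ω) (Z t ω))⁻¹.mulVec
              (∑ t ∈ Finset.range T, ζ t ω • Z t ω)} ≤ ENNReal.ofReal δ := by
  have hsymm : ∀ t x, CondIdentDistrib (ℱ t) (fun ω => x ⬝ᵥ Z t ω) (fun ω => -(x ⬝ᵥ Z t ω)) μ :=
    fun t x => by
      have hx : Measurable fun ω => x ⬝ᵥ Z t ω :=
        (measurable_dotProduct_right x).comp ((hZadapted t).mono (ℱ.le _) le_rfl)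
      refine (condIdentDistrib_iff_condExp_preimage (ℱ.le t) hx hx.neg).2 fun B hB => ?_
      exact hsym t x (B.indicator fun _ => 1) (measurable_const.indicator hB)
        ⟨1, fun y => by by_cases hy : y ∈ B <;> simp [hy]⟩
  simpa only [smul_sum, measure_univ, mul_one] using
    stmt_2_general μ ℱ T (fun _ _ => M) Z ζ hZadapted hζadapted hζbd hindep hsymm Q hQ δ hδ
end

section
/- Let {X_i}_{i=1}^n be a sequence of vector-valued random variables in ℝ^d adapted to a filtration {F_i}_{i=1}^n with E[X_i | F_i] = 0 and ‖X_i‖₂ ≤ B almost surely for some constant B. Then for every λ ∈ ℝ^d, the process U_n(λ) := exp(λᵀ Σ_{i=1}^n X_i − λᵀ(Σ_{i=1}^n X_i X_iᵀ + E[X_i X_iᵀ | F_i])λ / 2) is a supermartingale with E[U_n(λ)] ≤ 1 for all n. -/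
open MeasureTheory ProbabilityTheory Matrix Finset

/-!
The process is a product of factors `exp (Y - (Y² + V) / 2)` with `Y = ⟨l, X_i⟩` and
`V = E[Y² | F_i]`. From `exp (y - y² / 2) ≤ 1 + y + y² / 2` and `E[Y | F_i] = 0` one gets
`E[exp (Y - Y² / 2) | F_i] ≤ 1 + V / 2 ≤ exp (V / 2)`, so each factor has conditional expectation
at most one. Completing the square gives `y - y² / 2 ≤ 1 / 2`, so the factors are bounded by
`exp (1 / 2)` and their products are integrable.
-/

theorem exp_sub_sq_div_two_le (y : ℝ) : Real.exp (y - y ^ 2 / 2) ≤ 1 + y + y ^ 2 / 2 := by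
  have exp_neg_ge : 1 - (y - y ^ 2 / 2) ≤ Real.exp (-(y - y ^ 2 / 2)) :=
    Real.one_sub_le_exp_neg _
  have quad_nonneg : 0 ≤ 1 + y + y ^ 2 / 2 := by nlinarith [sq_nonneg (y + 1)]
  have one_le : 1 ≤ (1 + y + y ^ 2 / 2) * Real.exp (-(y - y ^ 2 / 2)) :=
    calc 1 ≤ 1 + y ^ 4 / 4 := by linarith [pow_nonneg (sq_nonneg y) 2]
      _ = (1 + y + y ^ 2 / 2) * (1 - (y - y ^ 2 / 2)) := by ring
      _ ≤ (1 + y + y ^ 2 / 2) * Real.exp (-(y - y ^ 2 / 2)) := by gcongr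
  rwa [Real.exp_neg, ← div_eq_mul_inv, one_le_div (Real.exp_pos _)] at one_le

theorem exp_sub_sq_div_two_le_exp_half (y : ℝ) :
    Real.exp (y - y ^ 2 / 2) ≤ Real.exp (1 / 2) :=
  Real.exp_le_exp.2 (by linarith [sq_nonneg (y - 1)])

theorem supermartingale_prod_of_condExp_le_one {Ω : Type*} {m0 : MeasurableSpace Ω}
    {μ : Measure Ω} [IsFiniteMeasure μ] {ℱ : Filtration ℕ m0} {f : ℕ → Ω → ℝ}
    (hmeas : ∀ i, StronglyMeasurable[ℱ (i + 1)] (f i)) (hbdd : ∀ i, MemLp (f i) ⊤ μ)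
    (hnonneg : ∀ i, 0 ≤ᵐ[μ] f i) (hle : ∀ i, μ[f i | ℱ i] ≤ᵐ[μ] 1) :
    Supermartingale (fun n => ∏ i ∈ range n, f i) ℱ μ := by
  have adapted : StronglyAdapted ℱ fun n => ∏ i ∈ range n, f i := fun n =>
    Finset.stronglyMeasurable_prod _ fun i hi =>
      (hmeas i).mono (ℱ.mono (Finset.mem_range.1 hi))
  have integrable : ∀ n, Integrable (∏ i ∈ range n, f i) μ := fun n =>
    (MemLp.prod fun i _ => hbdd i).integrable (by simp)
  refine supermartingale_nat adapted integrable fun n => ?_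
  have pull_out : μ[(∏ i ∈ range n, f i) * f n | ℱ n] =ᵐ[μ]
      (∏ i ∈ range n, f i) * μ[f n | ℱ n] :=
    condExp_mul_of_stronglyMeasurable_left (adapted n)
      (prod_range_succ f n ▸ integrable (n + 1)) ((hbdd n).integrable le_top)
  rw [prod_range_succ]
  filter_upwards [pull_out, hle n, ae_all_iff.2 hnonneg] with ω pull_out_ω le_one nonneg
  rw [pull_out_ω, Pi.mul_apply]
  refine mul_le_of_le_one_right ?_ le_one
  rw [Finset.prod_apply]
  exact prod_nonneg fun i _ => nonneg i

section SelfNormalizedExp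

variable {Ω : Type*} {m m0 : MeasurableSpace Ω} {μ : Measure Ω} {Y : Ω → ℝ}

/-- The exponential of `Y`, normalized by half the sum of `Y²` and its conditional second moment
given `m`. The exponential process of the theorem is a product of such factors, with `Y` the
increment and `m` the past. -/
noncomputable def selfNormalizedExp (μ : Measure Ω) (m : MeasurableSpace Ω) (Y : Ω → ℝ) (ω : Ω) :
    ℝ :=
  Real.exp (Y ω - (Y ω ^ 2 + (μ[fun ω' => Y ω' ^ 2 | m]) ω) / 2)

theorem selfNormalizedExp_pos (ω : Ω) : 0 < selfNormalizedExp μ m Y ω := Real.exp_pos _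

theorem selfNormalizedExp_eq_mul :
    selfNormalizedExp μ m Y =
      (fun ω => Real.exp (-((μ[fun ω' => Y ω' ^ 2 | m]) ω / 2))) *
        fun ω => Real.exp (Y ω - Y ω ^ 2 / 2) := by
  ext ω
  rw [selfNormalizedExp, Pi.mul_apply, ← Real.exp_add]
  ring_nf

theorem prod_selfNormalizedExp {ι : Type*} (s : Finset ι) (m : ι → MeasurableSpace Ω)
    (Y : ι → Ω → ℝ) (ω : Ω) :
    ∏ i ∈ s, selfNormalizedExp μ (m i) (Y i) ω =
      Real.exp (∑ i ∈ s, Y i ω -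
        (∑ i ∈ s, (Y i ω ^ 2 + (μ[fun ω' => Y i ω' ^ 2 | m i]) ω)) / 2) := by
  simp only [selfNormalizedExp, ← Real.exp_sum, sum_sub_distrib, sum_div]

theorem stronglyMeasurable_selfNormalizedExp {m' : MeasurableSpace Ω} (hm : m ≤ m')
    (hY : StronglyMeasurable[m'] Y) : StronglyMeasurable[m'] (selfNormalizedExp μ m Y) := by
  have hV : StronglyMeasurable[m'] (μ[fun ω' => Y ω' ^ 2 | m]) :=
    stronglyMeasurable_condExp.mono hm
  unfold selfNormalizedExp
  fun_prop

theorem memLp_top_selfNormalizedExp (hY : AEStronglyMeasurable Y μ) :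
    MemLp (selfNormalizedExp μ m Y) ⊤ μ := by
  have hV : AEStronglyMeasurable (μ[fun ω' => Y ω' ^ 2 | m]) μ :=
    integrable_condExp.aestronglyMeasurable
  have hV_nonneg : 0 ≤ᵐ[μ] μ[fun ω' => Y ω' ^ 2 | m] :=
    condExp_nonneg (ae_of_all _ fun ω => sq_nonneg (Y ω))
  refine memLp_top_of_bound (by unfold selfNormalizedExp; fun_prop) (Real.exp (1 / 2)) ?_
  filter_upwards [hV_nonneg] with ω hω
  rw [Real.norm_of_nonneg (selfNormalizedExp_pos ω).le]
  calc selfNormalizedExp μ m Y ω ≤ Real.exp (Y ω - Y ω ^ 2 / 2) :=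
        Real.exp_le_exp.2 (by simp only [Pi.zero_apply] at hω; linarith)
    _ ≤ Real.exp (1 / 2) := exp_sub_sq_div_two_le_exp_half _

variable [IsFiniteMeasure μ]

theorem integrable_exp_sub_sq_div_two (hY : AEStronglyMeasurable Y μ) :
    Integrable (fun ω => Real.exp (Y ω - Y ω ^ 2 / 2)) μ := by
  refine Integrable.of_bound (by fun_prop) (Real.exp (1 / 2)) (ae_of_all _ fun ω => ?_)
  rw [Real.norm_of_nonneg (Real.exp_pos _).le]
  exact exp_sub_sq_div_two_le_exp_half _

theorem condExp_exp_sub_sq_div_two_le (hm : m ≤ m0) (hY : MemLp Y 2 μ)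
    (hcent : μ[Y | m] =ᵐ[μ] 0) :
    μ[fun ω => Real.exp (Y ω - Y ω ^ 2 / 2) | m] ≤ᵐ[μ]
      fun ω => 1 + (μ[fun ω' => Y ω' ^ 2 | m]) ω / 2 := by
  let Q : Ω → ℝ := (fun _ => 1) + Y + (1 / 2 : ℝ) • fun ω => Y ω ^ 2
  have hone : Integrable (fun _ : Ω => (1 : ℝ)) μ := integrable_const 1
  have hY_int : Integrable Y μ := hY.integrable one_le_two
  have hsq_int : Integrable ((1 / 2 : ℝ) • fun ω => Y ω ^ 2) μ := hY.integrable_sq.smul _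
  have le_condExp_quad : μ[fun ω => Real.exp (Y ω - Y ω ^ 2 / 2) | m] ≤ᵐ[μ] μ[Q | m] :=
    condExp_mono (integrable_exp_sub_sq_div_two hY.1) ((hone.add hY_int).add hsq_int)
      (ae_of_all _ fun ω => (exp_sub_sq_div_two_le (Y ω)).trans_eq <| by
        simp only [Q, Pi.add_apply, Pi.smul_apply, smul_eq_mul]; ring)
  filter_upwards [le_condExp_quad, hcent, condExp_add (hone.add hY_int) hsq_int m,
    condExp_add hone hY_int m, condExp_smul (1 / 2 : ℝ) (fun ω => Y ω ^ 2) m (μ := μ)]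
    with ω hle hzero hadd_sq hadd_Y hsmul
  refine hle.trans_eq ?_
  rw [hadd_sq, Pi.add_apply, hadd_Y, Pi.add_apply, hsmul, hzero, condExp_const hm]
  simp only [Pi.smul_apply, Pi.zero_apply, smul_eq_mul]
  ring

theorem condExp_selfNormalizedExp_le_one (hm : m ≤ m0) (hY : MemLp Y 2 μ)
    (hcent : μ[Y | m] =ᵐ[μ] 0) : μ[selfNormalizedExp μ m Y | m] ≤ᵐ[μ] 1 := by
  let V : Ω → ℝ := μ[fun ω => Y ω ^ 2 | m]
  have hV : StronglyMeasurable[m] fun ω => Real.exp (-(V ω / 2)) := by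
    have : StronglyMeasurable[m] V := stronglyMeasurable_condExp
    fun_prop
  have hprod_int : Integrable (selfNormalizedExp μ m Y) μ :=
    (memLp_top_selfNormalizedExp hY.1).integrable le_top
  rw [selfNormalizedExp_eq_mul] at hprod_int ⊢
  filter_upwards [condExp_mul_of_stronglyMeasurable_left hV hprod_int
    (integrable_exp_sub_sq_div_two hY.1), condExp_exp_sub_sq_div_two_le hm hY hcent]
    with ω pull_out hle
  rw [pull_out, Pi.mul_apply]
  calc Real.exp (-(V ω / 2)) * (μ[fun ω => Real.exp (Y ω - Y ω ^ 2 / 2) | m]) ω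
      ≤ Real.exp (-(V ω / 2)) * Real.exp (V ω / 2) := by
        gcongr
        exact hle.trans (by linarith [Real.add_one_le_exp (V ω / 2)])
    _ = 1 := by rw [← Real.exp_add, neg_add_cancel, Real.exp_zero]

end SelfNormalizedExp

theorem norm_le_sqrt_dotProduct_self {ι : Type*} [Fintype ι] (x : ι → ℝ) :
    ‖x‖ ≤ Real.sqrt (x ⬝ᵥ x) := by
  refine (pi_norm_le_iff_of_nonneg (Real.sqrt_nonneg _)).2 fun j => Real.abs_le_sqrt ?_
  rw [sq]
  exact single_le_sum (f := fun i => x i * x i) (fun i _ => mul_self_nonneg (x i)) (mem_univ j)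

theorem memLp_of_sqrt_dotProduct_self_le {Ω ι : Type*} [Fintype ι] [MeasurableSpace Ω]
    {μ : Measure Ω} [IsFiniteMeasure μ] {X : Ω → ι → ℝ} {B : ℝ} {p : ENNReal}
    (hX : AEStronglyMeasurable X μ) (hbdd : ∀ᵐ ω ∂μ, Real.sqrt (X ω ⬝ᵥ X ω) ≤ B) :
    MemLp X p μ :=
  .of_bound hX B <| hbdd.mono fun ω => (norm_le_sqrt_dotProduct_self (X ω)).trans

theorem stmt_4_general {Ω E : Type*} {m0 : MeasurableSpace Ω} [NormedAddCommGroup E]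
    [NormedSpace ℝ E] [CompleteSpace E] {μ : Measure Ω} [IsFiniteMeasure μ] {ℱ : Filtration ℕ m0}
    {X : ℕ → Ω → E} (hadapted : ∀ i, StronglyMeasurable[ℱ (i + 1)] (X i))
    (hX : ∀ i, MemLp (X i) 2 μ) (hcent : ∀ i, μ[X i | ℱ i] =ᵐ[μ] 0) (L : StrongDual ℝ E)
    {U : ℕ → Ω → ℝ}
    (hU : ∀ n ω, U n ω =
      Real.exp (L (∑ i ∈ range n, X i ω) -
        (∑ i ∈ range n, (L (X i ω) ^ 2 + (μ[fun ω' => L (X i ω') ^ 2 | ℱ i]) ω)) / 2)) :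
    Supermartingale U ℱ μ ∧ ∀ n, ∫ ω, U n ω ∂μ ≤ μ.real Set.univ := by
  have hLX : ∀ i, MemLp (L ∘ X i) 2 μ := fun i => L.comp_memLp' (hX i)
  have hLX_cent : ∀ i, μ[L ∘ X i | ℱ i] =ᵐ[μ] 0 := fun i => by
    filter_upwards [L.comp_condExp_comm (m := ℱ i) ((hX i).integrable one_le_two), hcent i]
      with ω hcomm hzero
    rw [← hcomm, Function.comp_apply, hzero, Pi.zero_apply, map_zero, Pi.zero_apply]
  have hU_prod : U = fun n => ∏ i ∈ range n, selfNormalizedExp μ (ℱ i) (L ∘ X i) := by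
    ext n ω
    rw [hU, map_sum, Finset.prod_apply, prod_selfNormalizedExp]
    rfl
  have hsuper : Supermartingale U ℱ μ := hU_prod ▸ supermartingale_prod_of_condExp_le_one
    (fun i => stronglyMeasurable_selfNormalizedExp (ℱ.mono i.le_succ)
      (L.continuous.comp_stronglyMeasurable (hadapted i)))
    (fun i => memLp_top_selfNormalizedExp (hLX i).1)
    (fun i => ae_of_all _ fun ω => (selfNormalizedExp_pos ω).le)
    (fun i => condExp_selfNormalizedExp_le_one (ℱ.le i) (hLX i) (hLX_cent i))
  exact ⟨hsuper, fun n => by simpa [hU 0] using hsuper.setIntegral_le n.zero_le .univ⟩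

/-- **Lemma 7 of de la Peña et al.: the exponentiated process is a supermartingale.**
Let `X₁, X₂, …` be conditionally centered random vectors in `ℝ^d` adapted to a filtration
`{F_i}` (each `X_i` is realized by time `i+1`, with `E[X_i | F_i] = 0`) and `‖X_i‖₂ ≤ B`
a.s.  Then for every `l ∈ ℝ^d` the process
`U_n(l) = exp(lᵀ ∑_{i<n} X_i − lᵀ(∑_{i<n} X_i X_iᵀ + E[X_i X_iᵀ | F_i]) l / 2)`
(whose quadratic form is written below as `∑_{i<n} ((⟨l,X_i⟩)² + E[(⟨l,X_i⟩)² | F_i])`)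
is a supermartingale with `E[U_n(l)] ≤ 1` for all `n`. -/
theorem stmt_4 {Ω : Type*} {m0 : MeasurableSpace Ω}
    (μ : Measure Ω) [IsProbabilityMeasure μ]
    (ℱ : Filtration ℕ m0)
    {d : ℕ} (B : ℝ) (hB : 0 ≤ B)
    (X : ℕ → Ω → (Fin d → ℝ))
    (hadapted : ∀ i, Measurable[ℱ (i + 1)] (X i))
    (hbdd : ∀ i, ∀ᵐ ω ∂μ, Real.sqrt (X i ω ⬝ᵥ X i ω) ≤ B)
    (hcent : ∀ i, μ[X i | ℱ i] =ᵐ[μ] 0)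
    (l : Fin d → ℝ)
    (U : ℕ → Ω → ℝ)
    (hU : ∀ n ω, U n ω =
      Real.exp (l ⬝ᵥ (∑ i ∈ Finset.range n, X i ω) -
        (∑ i ∈ Finset.range n,
          ((l ⬝ᵥ X i ω) ^ 2 + (μ[(fun ω' => (l ⬝ᵥ X i ω') ^ 2) | ℱ i]) ω)) / 2)) :
    Supermartingale U ℱ μ ∧ ∀ n, ∫ ω, U n ω ∂μ ≤ 1 := by
  simpa using stmt_4_general (fun i => (hadapted i).stronglyMeasurable)
    (fun i => memLp_of_sqrt_dotProduct_self_le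
      ((hadapted i).mono (ℱ.le _) le_rfl).aestronglyMeasurable (hbdd i))
    hcent (dotProductBilin ℝ ℝ l).toContinuousLinearMap hU
end

section
/- Let X₁,…,X_n be random vectors in ℝ^d adapted to a filtration {F_t}_{t=1}^n with E[X_i | F_i] = 0 and ‖X_i‖₂ ≤ 1 almost surely. Define Σ̂ := Σ_{i=1}^n X_i X_iᵀ and Σ := Σ_{i=1}^n E[X_i X_iᵀ | F_i]. Then for any δ ∈ (0,1), with probability at least 1 − δ, the inequality vᵀ Σ v ≤ 2 vᵀ Σ̂ v + 9d·log(9n) + 8·log(2/δ) holds simultaneously for all unit vectors v ∈ ℝ^d. -/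
open MeasureTheory ProbabilityTheory Matrix Finset

/-!
For a fixed `w` in the unit ball put `Yᵢ = ⟪w, Xᵢ⟫² ∈ [0, 1]`. From `exp (-y) ≤ 1 - y / 2` on
`[0, 1]` one gets `E[exp (E[Yᵢ | ℱ i] / 2 - Yᵢ) | ℱ i] ≤ 1`, so `exp ∑ (E[Yᵢ | ℱ i] / 2 - Yᵢ)` is a
supermartingale and Markov's inequality bounds the upper tail of the quadratic form of
`A = ∑ (E[Xᵢ ⊗ Xᵢ | ℱ i] / 2 - Xᵢ ⊗ Xᵢ)` at `w`. A union bound covers an `ε`-net of the unit ball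
with at most `(1 + 2 / ε) ^ d` points, and `‖A‖ ≤ 3 n / 2` passes from the net to all unit vectors;
the theorem is the case `ε = 1 / (2 n)`.
-/

section Compensator

lemma exp_neg_le_one_sub_half {y : ℝ} (h0 : 0 ≤ y) (h1 : y ≤ 1) :
    Real.exp (-y) ≤ 1 - y / 2 := by
  have hquad : 1 + y + y ^ 2 / 2 ≤ Real.exp y := Real.quadratic_le_exp_of_nonneg h0
  rw [Real.exp_neg, inv_le_iff_one_le_mul₀ (Real.exp_pos y)]
  calc (1 : ℝ) ≤ (1 - y / 2) * (1 + y + y ^ 2 / 2) := by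
        nlinarith [mul_nonneg h0 (sub_nonneg.2 h1), mul_nonneg (sq_nonneg y) (sub_nonneg.2 h1)]
    _ ≤ (1 - y / 2) * Real.exp y := by gcongr; linarith

variable {Ω : Type*} {m m0 : MeasurableSpace Ω} {μ : Measure Ω}

lemma abs_condExp_le_one_of_mem_Icc {Y : Ω → ℝ} (hbd : ∀ᵐ ω ∂μ, Y ω ∈ Set.Icc 0 1) :
    ∀ᵐ ω ∂μ, |(μ[Y | m]) ω| ≤ 1 :=
  ae_bdd_norm_condExp_of_ae_bdd_norm <| by
    filter_upwards [hbd] with ω hω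
    rw [Real.norm_of_nonneg hω.1]
    exact hω.2

lemma integrable_exp_neg_of_nonneg [IsFiniteMeasure μ] {Y : Ω → ℝ}
    (hY : AEStronglyMeasurable Y μ) (hnonneg : ∀ᵐ ω ∂μ, 0 ≤ Y ω) :
    Integrable (fun ω => Real.exp (-Y ω)) μ := by
  refine .of_mem_Icc 0 1 (by fun_prop) ?_
  filter_upwards [hnonneg] with ω hω
  exact ⟨(Real.exp_pos _).le, Real.exp_le_one_iff.2 (neg_nonpos.2 hω)⟩

lemma condExp_exp_neg_le_exp_neg_half_condExp [IsFiniteMeasure μ] (hm : m ≤ m0) {Y : Ω → ℝ}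
    (hY : AEStronglyMeasurable Y μ) (hbd : ∀ᵐ ω ∂μ, Y ω ∈ Set.Icc 0 1) :
    μ[fun ω => Real.exp (-Y ω) | m] ≤ᵐ[μ] fun ω => Real.exp (-((μ[Y | m]) ω / 2)) := by
  have hY_int : Integrable Y μ := .of_mem_Icc 0 1 hY.aemeasurable hbd
  have hhalf_int : Integrable ((2⁻¹ : ℝ) • Y) μ := hY_int.smul 2⁻¹
  have hle : (fun ω => Real.exp (-Y ω)) ≤ᵐ[μ] (fun _ => 1) - (2⁻¹ : ℝ) • Y := by
    filter_upwards [hbd] with ω hω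
    have hexp := exp_neg_le_one_sub_half hω.1 hω.2
    rwa [div_eq_inv_mul] at hexp
  have hexp_int := integrable_exp_neg_of_nonneg hY (hbd.mono fun _ hω => hω.1)
  filter_upwards [condExp_mono (m := m) hexp_int ((integrable_const 1).sub hhalf_int) hle,
    condExp_sub (integrable_const 1) hhalf_int m, condExp_smul (2⁻¹ : ℝ) Y m]
    with ω hmono hsub hsmul
  rw [hsub, Pi.sub_apply, hsmul, condExp_const hm, Pi.smul_apply, smul_eq_mul] at hmono
  linarith [Real.add_one_le_exp (-((μ[Y | m]) ω / 2))]

lemma condExp_exp_half_condExp_sub_le_one [IsFiniteMeasure μ] (hm : m ≤ m0) {Y : Ω → ℝ}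
    (hY : AEStronglyMeasurable Y μ) (hbd : ∀ᵐ ω ∂μ, Y ω ∈ Set.Icc 0 1) :
    μ[fun ω => Real.exp ((μ[Y | m]) ω / 2 - Y ω) | m] ≤ᵐ[μ] 1 := by
  set D : Ω → ℝ := μ[Y | m]
  have hD_meas : StronglyMeasurable[m] D := stronglyMeasurable_condExp
  have hexpD_meas : StronglyMeasurable[m] fun ω => Real.exp (D ω / 2) :=
    (Real.continuous_exp.comp (continuous_id.div_const 2)).comp_stronglyMeasurable hD_meas
  have hexpY_int := integrable_exp_neg_of_nonneg hY (hbd.mono fun _ hω => hω.1)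
  have hprod_int : Integrable
      ((fun ω => Real.exp (D ω / 2)) * fun ω => Real.exp (-Y ω)) μ := by
    refine hexpY_int.bdd_mul (c := Real.exp (1 / 2))
      (hexpD_meas.mono hm).aestronglyMeasurable ?_
    filter_upwards [abs_condExp_le_one_of_mem_Icc hbd] with ω hω
    rw [Real.norm_of_nonneg (Real.exp_pos _).le, Real.exp_le_exp]
    linarith [le_of_abs_le hω]
  simp only [sub_eq_add_neg, Real.exp_add]
  filter_upwards [condExp_mul_of_stronglyMeasurable_left hexpD_meas hprod_int hexpY_int,
    condExp_exp_neg_le_exp_neg_half_condExp hm hY hbd] with ω hpull hle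
  calc (μ[(fun ω => Real.exp (D ω / 2)) * fun ω => Real.exp (-Y ω) | m]) ω
      = Real.exp (D ω / 2) * (μ[fun ω => Real.exp (-Y ω) | m]) ω := hpull
    _ ≤ Real.exp (D ω / 2) * Real.exp (-(D ω / 2)) := by gcongr
    _ = 1 := by rw [← Real.exp_add, add_neg_cancel, Real.exp_zero]

lemma supermartingale_prod_range [IsFiniteMeasure μ] {ℱ : Filtration ℕ m0} {U : ℕ → Ω → ℝ}
    {R : ℕ → ℝ} (hU : ∀ i, StronglyMeasurable[ℱ (i + 1)] (U i)) (hnonneg : ∀ i ω, 0 ≤ U i ω)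
    (hbd : ∀ i, ∀ᵐ ω ∂μ, U i ω ≤ R i) (hcond : ∀ i, μ[U i | ℱ i] ≤ᵐ[μ] 1) :
    Supermartingale (fun n ω => ∏ i ∈ range n, U i ω) ℱ μ := by
  have hadapted : StronglyAdapted ℱ fun n ω => ∏ i ∈ range n, U i ω := fun n =>
    Finset.stronglyMeasurable_fun_prod _ fun i hi =>
      (hU i).mono (ℱ.mono (Nat.succ_le_of_lt (mem_range.1 hi)))
  have hU_norm (i : ℕ) : ∀ᵐ ω ∂μ, ‖U i ω‖ ≤ R i := by
    filter_upwards [hbd i] with ω hω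
    rwa [Real.norm_of_nonneg (hnonneg i ω)]
  have hU_meas (i : ℕ) : AEStronglyMeasurable (U i) μ :=
    ((hU i).mono (ℱ.le _)).aestronglyMeasurable
  have hint (n : ℕ) : Integrable (fun ω => ∏ i ∈ range n, U i ω) μ := by
    induction n with
    | zero => simp
    | succ n ih =>
      simp only [prod_range_succ]
      exact ih.mul_bdd (hU_meas n) (hU_norm n)
  refine supermartingale_nat hadapted hint fun n => ?_
  have hpull : μ[(fun ω => ∏ i ∈ range n, U i ω) * U n | ℱ n] =ᵐ[μ]
      (fun ω => ∏ i ∈ range n, U i ω) * μ[U n | ℱ n] :=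
    condExp_mul_of_stronglyMeasurable_left (hadapted n) ((hint n).mul_bdd (hU_meas n) (hU_norm n))
      (.of_bound (hU_meas n) (R n) (hU_norm n))
  simp only [prod_range_succ]
  filter_upwards [hpull, hcond n] with ω hω hω_le
  exact hω.trans_le (mul_le_of_le_one_right (prod_nonneg fun i _ => hnonneg i ω) hω_le)

lemma supermartingale_exp_half_compensator_sub [IsFiniteMeasure μ] {ℱ : Filtration ℕ m0}
    {Y : ℕ → Ω → ℝ} (hY : ∀ i, StronglyMeasurable[ℱ (i + 1)] (Y i))
    (hbd : ∀ i, ∀ᵐ ω ∂μ, Y i ω ∈ Set.Icc 0 1) :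
    Supermartingale
      (fun n ω => Real.exp (∑ i ∈ range n, ((μ[Y i | ℱ i]) ω / 2 - Y i ω))) ℱ μ := by
  simp only [Real.exp_sum]
  have hY_meas (i : ℕ) : AEStronglyMeasurable (Y i) μ :=
    ((hY i).mono (ℱ.le _)).aestronglyMeasurable
  refine supermartingale_prod_range (R := fun _ => Real.exp (1 / 2)) (fun i => ?_)
    (fun i ω => (Real.exp_pos _).le) (fun i => ?_)
    fun i => condExp_exp_half_condExp_sub_le_one (ℱ.le i) (hY_meas i) (hbd i)
  · have hD_meas : StronglyMeasurable[ℱ i] (μ[Y i | ℱ i]) := stronglyMeasurable_condExp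
    exact (Real.continuous_exp.comp ((continuous_fst.div_const 2).sub continuous_snd))
      |>.comp_stronglyMeasurable ((hD_meas.mono (ℱ.mono i.le_succ)).prodMk (hY i))
  · filter_upwards [hbd i, abs_condExp_le_one_of_mem_Icc (hbd i)] with ω hω hDω
    rw [Real.exp_le_exp]
    linarith [le_of_abs_le hDω, hω.1]

lemma measureReal_ge_half_compensator_sub_le [IsProbabilityMeasure μ] {ℱ : Filtration ℕ m0}
    {Y : ℕ → Ω → ℝ} (hY : ∀ i, StronglyMeasurable[ℱ (i + 1)] (Y i))
    (hbd : ∀ i, ∀ᵐ ω ∂μ, Y i ω ∈ Set.Icc 0 1) (n : ℕ) (a : ℝ) :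
    μ.real {ω | a ≤ ∑ i ∈ range n, ((μ[Y i | ℱ i]) ω / 2 - Y i ω)} ≤ Real.exp (-a) := by
  have hsuper := supermartingale_exp_half_compensator_sub hY hbd
  set S : Ω → ℝ := fun ω => ∑ i ∈ range n, ((μ[Y i | ℱ i]) ω / 2 - Y i ω) with hS
  have hmgf : mgf S μ 1 ≤ 1 := by
    simpa [mgf, hS] using hsuper.setIntegral_le (Nat.zero_le n) MeasurableSet.univ
  calc μ.real {ω | a ≤ S ω}
      ≤ Real.exp (-1 * a) * mgf S μ 1 :=
        measure_ge_le_exp_mul_mgf a zero_le_one (by simpa only [one_mul] using hsuper.integrable n)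
    _ ≤ Real.exp (-a) := by
        rw [neg_one_mul]
        exact mul_le_of_le_one_right (Real.exp_pos _).le hmgf

end Compensator

section Net

open Metric Module
open scoped NNReal ENNReal

variable {E : Type*} [NormedAddCommGroup E] [NormedSpace ℝ E] [FiniteDimensional ℝ E]

lemma card_le_of_isSeparated_of_subset_closedBall {ε : ℝ≥0} {r : ℝ} (hε : 0 < ε) (hr : 0 ≤ r)
    {x : E} {s : Finset E} (hsep : IsSeparated ε (s : Set E))
    (hs : (s : Set E) ⊆ closedBall x r) :
    (#s : ℝ) ≤ (1 + 2 * r / ε) ^ finrank ℝ E := by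
  borelize E
  set d := finrank ℝ E
  let vol : Measure E := Measure.addHaar
  have hε2 : (0 : ℝ) < ε / 2 := by positivity
  have hdisj : (s : Set E).PairwiseDisjoint fun c => ball c (ε / 2) := fun c hc c' hc' hne => by
    have hlt : (ε : ℝ≥0∞) < edist c c' := hsep hc hc' hne
    rw [edist_nndist, ENNReal.coe_lt_coe, ← NNReal.coe_lt_coe, coe_nndist] at hlt
    exact ball_disjoint_ball (by linarith)
  have hball (c : E) {ρ : ℝ} (hρ : 0 < ρ) : vol.real (ball c ρ) = ρ ^ d * vol.real (ball 0 1) := by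
    rw [measureReal_def, Measure.addHaar_ball_of_pos vol c hρ, ENNReal.toReal_mul,
      ENNReal.toReal_ofReal (by positivity), measureReal_def]
  have hunit : 0 < vol.real (ball (0 : E) 1) :=
    ENNReal.toReal_pos (measure_ball_pos vol 0 one_pos).ne' measure_ball_lt_top.ne
  have hvol : #s * (ε / 2 : ℝ) ^ d ≤ (r + ε / 2) ^ d := by
    refine le_of_mul_le_mul_right ?_ hunit
    calc #s * (ε / 2 : ℝ) ^ d * vol.real (ball 0 1)
        = ∑ c ∈ s, vol.real (ball c (ε / 2)) := by
          simp only [hball _ hε2, sum_const, nsmul_eq_mul, mul_assoc]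
      _ = vol.real (⋃ c ∈ s, ball c (ε / 2)) :=
          (measureReal_biUnion_finset hdisj (fun _ _ => measurableSet_ball)
            fun _ _ => measure_ball_lt_top.ne).symm
      _ ≤ vol.real (ball x (r + ε / 2)) :=
          measureReal_mono (Set.iUnion₂_subset fun c hc => ball_subset_ball' <| by
            linarith [mem_closedBall.1 (hs hc)]) measure_ball_lt_top.ne
      _ = (r + ε / 2) ^ d * vol.real (ball 0 1) := hball x (by positivity)
  calc (#s : ℝ) ≤ (r + ε / 2) ^ d / (ε / 2 : ℝ) ^ d := (le_div_iff₀ (by positivity)).2 hvol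
    _ = (1 + 2 * r / ε) ^ d := by
        rw [← div_pow]
        congr 1
        field_simp
        ring

lemma packingNumber_ne_top_of_totallyBounded {X : Type*} [PseudoEMetricSpace X] {A : Set X}
    {ε : ℝ≥0} (hε : 0 < ε) (hA : TotallyBounded A) :
    packingNumber ε A ≠ ⊤ := by
  obtain ⟨C, -, hC, hcover⟩ := exists_finite_isCover_of_totallyBounded (half_pos hε).ne' hA
  have hpacking := packingNumber_two_mul_le_externalCoveringNumber (ε / 2) A
  rw [mul_div_cancel₀ _ two_ne_zero] at hpacking
  exact ((hpacking.trans hcover.externalCoveringNumber_le_encard).trans_lt hC.encard_lt_top).ne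

lemma exists_finset_isCover_closedBall_card_le {ε : ℝ≥0} {r : ℝ} (hε : 0 < ε) (hr : 0 ≤ r)
    (x : E) :
    ∃ t : Finset E, (t : Set E) ⊆ closedBall x r ∧ IsCover ε (closedBall x r) (t : Set E) ∧
      (#t : ℝ) ≤ (1 + 2 * r / ε) ^ finrank ℝ E := by
  have hfin := packingNumber_ne_top_of_totallyBounded hε
    (isCompact_closedBall x r).totallyBounded
  have hmax : (maximalSeparatedSet ε (closedBall x r)).Finite :=
    Set.encard_ne_top_iff.1 (encard_maximalSeparatedSet hfin ▸ hfin)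
  refine ⟨hmax.toFinset, ?_, ?_,
    card_le_of_isSeparated_of_subset_closedBall (x := x) hε hr ?_ ?_⟩ <;>
    rw [hmax.coe_toFinset]
  exacts [maximalSeparatedSet_subset, isCover_maximalSeparatedSet hfin,
    isSeparated_maximalSeparatedSet, maximalSeparatedSet_subset]

end Net

section SecondMoment

open InnerProductSpace
open scoped InnerProductSpace

variable {E : Type*} [NormedAddCommGroup E] [InnerProductSpace ℝ E]

lemma abs_inner_map_sub_inner_map_le (A : E →L[ℝ] E) (v w : E) :
    |⟪v, A v⟫_ℝ - ⟪w, A w⟫_ℝ| ≤ ‖A‖ * ‖v - w‖ * (‖v‖ + ‖w‖) := by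
  have hsplit : ⟪v, A v⟫_ℝ - ⟪w, A w⟫_ℝ = ⟪v - w, A v⟫_ℝ + ⟪w, A (v - w)⟫_ℝ := by
    rw [map_sub, inner_sub_left, inner_sub_right]
    ring
  calc |⟪v, A v⟫_ℝ - ⟪w, A w⟫_ℝ|
      ≤ |⟪v - w, A v⟫_ℝ| + |⟪w, A (v - w)⟫_ℝ| := hsplit ▸ abs_add_le _ _
    _ ≤ ‖v - w‖ * (‖A‖ * ‖v‖) + ‖w‖ * (‖A‖ * ‖v - w‖) := by
        gcongr
        · exact (abs_real_inner_le_norm _ _).trans (by gcongr; exact A.le_opNorm v)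
        · exact (abs_real_inner_le_norm _ _).trans (by gcongr; exact A.le_opNorm _)
    _ = ‖A‖ * ‖v - w‖ * (‖v‖ + ‖w‖) := by ring

open Metric in
lemma inner_map_le_of_isCover_closedBall {A : E →L[ℝ] E} {C a r : ℝ} {ε : NNReal} {t : Set E}
    (hA : ‖A‖ ≤ C) (ht : t ⊆ closedBall 0 r) (hcover : IsCover ε (closedBall 0 r) t)
    (ha : ∀ w ∈ t, ⟪w, A w⟫_ℝ ≤ a) {v : E} (hv : ‖v‖ ≤ r) :
    ⟪v, A v⟫_ℝ ≤ a + 2 * C * r * ε := by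
  obtain ⟨w, hw, hvw⟩ : ∃ w ∈ t, ‖v - w‖ ≤ ε := by
    simpa [dist_eq_norm] using
      isCover_iff_subset_iUnion_closedBall.1 hcover (mem_closedBall_zero_iff.2 hv)
  have hwr : ‖w‖ ≤ r := mem_closedBall_zero_iff.1 (ht hw)
  have hC : 0 ≤ C := (norm_nonneg A).trans hA
  have hdiff : ⟪v, A v⟫_ℝ - ⟪w, A w⟫_ℝ ≤ 2 * C * r * ε :=
    calc ⟪v, A v⟫_ℝ - ⟪w, A w⟫_ℝ ≤ ‖A‖ * ‖v - w‖ * (‖v‖ + ‖w‖) :=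
          (le_abs_self _).trans (abs_inner_map_sub_inner_map_le A v w)
      _ ≤ C * ε * (r + r) := by gcongr
      _ = 2 * C * r * ε := by ring
  linarith [ha w hw]

variable {Ω : Type*} {m m0 : MeasurableSpace Ω} {μ : Measure Ω}

lemma integrable_rankOne_self {x : Ω → E} (hx : MemLp x 2 μ) :
    Integrable (fun ω => rankOne ℝ (x ω) (x ω)) μ := by
  have hcont : Continuous fun y : E => rankOne ℝ y y :=
    (rankOne ℝ).continuous.clm_apply continuous_id
  refine (hx.integrable_norm_pow two_ne_zero).mono'
    (hcont.comp_aestronglyMeasurable hx.aestronglyMeasurable) (ae_of_all _ fun ω => ?_)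
  rw [norm_rankOne, pow_two]

/-- The conditional second moment `E[x ⊗ x | m]` of a random vector, as a conditional expectation
valued in the Banach space of operators: quadratic forms and norms are then controlled for all
directions at once. -/
noncomputable def condSecondMoment (μ : Measure Ω) (m : MeasurableSpace Ω) (x : Ω → E) :
    Ω → E →L[ℝ] E :=
  μ[fun ω => rankOne ℝ (x ω) (x ω) | m]

variable [CompleteSpace E]

lemma norm_condSecondMoment_le_one {x : Ω → E} (hbd : ∀ᵐ ω ∂μ, ‖x ω‖ ≤ 1) :
    ∀ᵐ ω ∂μ, ‖condSecondMoment μ m x ω‖ ≤ 1 :=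
  ae_bdd_norm_condExp_of_ae_bdd_norm <| by
    filter_upwards [hbd] with ω hω
    rw [norm_rankOne]
    exact mul_le_one₀ hω (norm_nonneg _) hω

lemma inner_condSecondMoment_ae_eq {x : Ω → E} (hx : MemLp x 2 μ) (u v : E) :
    (fun ω => ⟪u, condSecondMoment μ m x ω v⟫_ℝ) =ᵐ[μ] μ[fun ω => ⟪u, x ω⟫_ℝ * ⟪v, x ω⟫_ℝ | m] := by
  let T : (E →L[ℝ] E) →L[ℝ] ℝ := (innerSL ℝ u).comp (ContinuousLinearMap.apply ℝ E v)
  have hT : (fun ω => ⟪u, x ω⟫_ℝ * ⟪v, x ω⟫_ℝ) = fun ω => T (rankOne ℝ (x ω) (x ω)) := by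
    ext ω
    simp [T, real_inner_comm, mul_comm]
  rw [hT]
  exact T.comp_condExp_comm (integrable_rankOne_self hx)

end SecondMoment

section CovarianceGap

open InnerProductSpace Module
open scoped InnerProductSpace

variable {Ω E : Type*} [NormedAddCommGroup E] [InnerProductSpace ℝ E] {m0 : MeasurableSpace Ω}
  {μ : Measure Ω} {ℱ : Filtration ℕ m0} {X : ℕ → Ω → E} {n : ℕ}

/-- Half of the predictable covariance `∑ i < n, E[Xᵢ ⊗ Xᵢ | ℱ i]` minus the empirical covariance
`∑ i < n, Xᵢ ⊗ Xᵢ`. -/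
noncomputable def covarianceGap (μ : Measure Ω) (ℱ : Filtration ℕ m0) (X : ℕ → Ω → E) (n : ℕ)
    (ω : Ω) : E →L[ℝ] E :=
  ∑ i ∈ range n, ((1 / 2 : ℝ) • condSecondMoment μ (ℱ i) (X i) ω - rankOne ℝ (X i ω) (X i ω))

lemma inner_covarianceGap (v : E) (ω : Ω) :
    ⟪v, covarianceGap μ ℱ X n ω v⟫_ℝ =
      ∑ i ∈ range n, (⟪v, condSecondMoment μ (ℱ i) (X i) ω v⟫_ℝ / 2 - ⟪v, X i ω⟫_ℝ ^ 2) := by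
  rw [covarianceGap, _root_.sum_apply, inner_sum]
  refine sum_congr rfl fun i _ => ?_
  simp only [_root_.sub_apply, _root_.smul_apply, rankOne_apply, inner_sub_right, inner_smul_right,
    real_inner_comm v]
  ring

section Complete

variable [CompleteSpace E]

lemma norm_covarianceGap_le (hbd : ∀ i, ∀ᵐ ω ∂μ, ‖X i ω‖ ≤ 1) :
    ∀ᵐ ω ∂μ, ‖covarianceGap μ ℱ X n ω‖ ≤ 3 / 2 * n := by
  filter_upwards [ae_all_iff.2 hbd,
    ae_all_iff.2 fun i => norm_condSecondMoment_le_one (m := ℱ i) (hbd i)] with ω hX hC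
  have hterm (i : ℕ) : ‖(1 / 2 : ℝ) • condSecondMoment μ (ℱ i) (X i) ω -
      rankOne ℝ (X i ω) (X i ω)‖ ≤ 3 / 2 :=
    calc _ ≤ 1 / 2 * ‖condSecondMoment μ (ℱ i) (X i) ω‖ + ‖X i ω‖ * ‖X i ω‖ := by
          refine (norm_sub_le _ _).trans_eq ?_
          rw [norm_smul, norm_rankOne, Real.norm_of_nonneg (by norm_num)]
      _ ≤ 1 / 2 * 1 + 1 * 1 := by gcongr <;> simp only [hX i, hC i]
      _ = 3 / 2 := by norm_num
  calc ‖covarianceGap μ ℱ X n ω‖ ≤ ∑ _i ∈ range n, (3 / 2 : ℝ) :=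
        norm_sum_le_of_le _ fun i _ => hterm i
    _ = 3 / 2 * n := by rw [sum_const, card_range, nsmul_eq_mul, mul_comm]

variable [IsProbabilityMeasure μ]

lemma measureReal_le_inner_covarianceGap_le (hX : ∀ i, StronglyMeasurable[ℱ (i + 1)] (X i))
    (hbd : ∀ i, ∀ᵐ ω ∂μ, ‖X i ω‖ ≤ 1) {w : E} (hw : ‖w‖ ≤ 1) (a : ℝ) :
    μ.real {ω | a ≤ ⟪w, covarianceGap μ ℱ X n ω w⟫_ℝ} ≤ Real.exp (-a) := by
  have hY (i : ℕ) : StronglyMeasurable[ℱ (i + 1)] fun ω => ⟪w, X i ω⟫_ℝ * ⟪w, X i ω⟫_ℝ :=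
    ((innerSL ℝ w).continuous.comp_stronglyMeasurable (hX i)).mul
      ((innerSL ℝ w).continuous.comp_stronglyMeasurable (hX i))
  have hY_bdd (i : ℕ) : ∀ᵐ ω ∂μ, ⟪w, X i ω⟫_ℝ * ⟪w, X i ω⟫_ℝ ∈ Set.Icc 0 1 := by
    filter_upwards [hbd i] with ω hω
    have hinner : |⟪w, X i ω⟫_ℝ| ≤ 1 :=
      (abs_real_inner_le_norm _ _).trans (mul_le_one₀ hw (norm_nonneg _) hω)
    exact ⟨mul_self_nonneg _, by rwa [← pow_two, sq_le_one_iff_abs_le_one]⟩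
  refine le_trans (measureReal_congr ?_).le (measureReal_ge_half_compensator_sub_le hY hY_bdd n a)
  have hX_mem (i : ℕ) : MemLp (X i) 2 μ :=
    .of_bound ((hX i).mono (ℱ.le _)).aestronglyMeasurable 1 (hbd i)
  filter_upwards [ae_all_iff.2 fun i =>
    inner_condSecondMoment_ae_eq (m := ℱ i) (hX_mem i) w w] with ω hω
  refine congrArg (a ≤ ·) ?_
  simp only [inner_covarianceGap, hω, pow_two]

lemma measureReal_exists_le_inner_covarianceGap_le
    (hX : ∀ i, StronglyMeasurable[ℱ (i + 1)] (X i)) (hbd : ∀ i, ∀ᵐ ω ∂μ, ‖X i ω‖ ≤ 1)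
    {t : Finset E} (ht : ∀ w ∈ t, ‖w‖ ≤ 1) (a : ℝ) :
    μ.real {ω | ∃ w ∈ t, a ≤ ⟪w, covarianceGap μ ℱ X n ω w⟫_ℝ} ≤ #t * Real.exp (-a) :=
  calc μ.real {ω | ∃ w ∈ t, a ≤ ⟪w, covarianceGap μ ℱ X n ω w⟫_ℝ}
      = μ.real (⋃ w ∈ t, {ω | a ≤ ⟪w, covarianceGap μ ℱ X n ω w⟫_ℝ}) := by
        simp only [Set.iUnion_ofPred, exists_prop]
    _ ≤ ∑ w ∈ t, μ.real {ω | a ≤ ⟪w, covarianceGap μ ℱ X n ω w⟫_ℝ} :=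
        measureReal_biUnion_finset_le _ _
    _ ≤ #t • Real.exp (-a) := sum_le_card_nsmul _ _ _ fun w hw =>
        measureReal_le_inner_covarianceGap_le hX hbd (ht w hw) a
    _ = #t * Real.exp (-a) := nsmul_eq_mul _ _

end Complete

variable [IsProbabilityMeasure μ]

lemma ofReal_one_sub_le_measure_of_ae {B G : Set Ω} {δ : ℝ} (hB : μ.real B ≤ δ)
    (hBG : ∀ᵐ ω ∂μ, ω ∉ B → ω ∈ G) : ENNReal.ofReal (1 - δ) ≤ μ G := by
  have hcover : 1 ≤ μ.real B + μ.real G := by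
    rw [← probReal_univ (μ := μ)]
    refine le_trans (measureReal_congr ?_).le (measureReal_union_le B G)
    filter_upwards [hBG] with ω hω
    exact (eq_true (or_iff_not_imp_left.2 hω)).symm
  exact (ENNReal.ofReal_le_ofReal (by linarith)).trans_eq (ofReal_measureReal)

theorem ofReal_one_sub_le_measure_forall_inner_covarianceGap_le [FiniteDimensional ℝ E]
    (hX : ∀ i, StronglyMeasurable[ℱ (i + 1)] (X i)) (hbd : ∀ i, ∀ᵐ ω ∂μ, ‖X i ω‖ ≤ 1) {δ ε : ℝ}
    (hδ : 0 < δ) (hε : 0 < ε) :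
    ENNReal.ofReal (1 - δ) ≤ μ {ω | ∀ v : E, ‖v‖ ≤ 1 → ⟪v, covarianceGap μ ℱ X n ω v⟫_ℝ ≤
      finrank ℝ E * Real.log (1 + 2 / ε) + Real.log (1 / δ) + 3 * n * ε} := by
  have := FiniteDimensional.complete ℝ E
  lift ε to NNReal using hε.le
  obtain ⟨t, ht, hcover, hcard⟩ :=
    exists_finset_isCover_closedBall_card_le (NNReal.coe_pos.1 hε) zero_le_one (0 : E)
  set a := finrank ℝ E * Real.log (1 + 2 / ε) + Real.log (1 / δ) with ha
  have hexp : Real.exp a = (1 + 2 / ε) ^ finrank ℝ E / δ := by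
    rw [ha, Real.exp_add, Real.exp_nat_mul, Real.exp_log (by positivity),
      Real.exp_log (by positivity), mul_one_div]
  have hunion : #t * Real.exp (-a) ≤ δ := by
    rw [mul_one] at hcard
    rw [Real.exp_neg, hexp, inv_div, mul_div_assoc', div_le_iff₀ (by positivity), mul_comm]
    gcongr
  refine ofReal_one_sub_le_measure_of_ae ((measureReal_exists_le_inner_covarianceGap_le (n := n) hX
    hbd (fun w hw => mem_closedBall_zero_iff.1 (ht hw)) a).trans hunion) ?_
  filter_upwards [norm_covarianceGap_le (ℱ := ℱ) (n := n) hbd] with ω hnorm hω v hv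
  have hnet : ∀ w ∈ (t : Set E), ⟪w, covarianceGap μ ℱ X n ω w⟫_ℝ ≤ a := fun w hw =>
    (not_le.1 fun hle => hω ⟨w, hw, hle⟩).le
  calc ⟪v, covarianceGap μ ℱ X n ω v⟫_ℝ ≤ a + 2 * (3 / 2 * n) * 1 * ε :=
        inner_map_le_of_isCover_closedBall hnorm ht hcover hnet hv
    _ = a + 3 * n * ε := by ring

end CovarianceGap

section Coordinates

open InnerProductSpace
open scoped InnerProductSpace

variable {Ω ι : Type*} [Fintype ι] {m m0 : MeasurableSpace Ω} {μ : Measure Ω}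

lemma condSecondMoment_ae_eq_toEuclideanCLM [DecidableEq ι] {x : Ω → EuclideanSpace ℝ ι}
    (hx : MemLp x 2 μ) :
    condSecondMoment μ m x =ᵐ[μ] fun ω =>
      Matrix.toEuclideanCLM (𝕜 := ℝ) (Matrix.of fun j k => (μ[fun ω => x ω j * x ω k | m]) ω) := by
  let basis := EuclideanSpace.basisFun ι ℝ
  have hentry (j k : ι) : (fun ω => condSecondMoment μ m x ω (basis k) j) =ᵐ[μ]
      μ[fun ω => x ω j * x ω k | m] := by
    simpa only [basis, EuclideanSpace.basisFun_inner] using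
      inner_condSecondMoment_ae_eq (m := m) hx (basis j) (basis k)
  filter_upwards [ae_all_iff.2 fun j => ae_all_iff.2 (hentry j)] with ω hω
  refine ContinuousLinearMap.coe_injective (basis.toBasis.ext fun k => PiLp.ext fun j => ?_)
  simpa [basis, Matrix.ofLp_toEuclideanCLM] using hω j k

lemma inner_covarianceGap_ae_eq_dotProduct {ℱ : Filtration ℕ m0}
    {X : ℕ → Ω → EuclideanSpace ℝ ι} (hX : ∀ i, MemLp (X i) 2 μ) (n : ℕ) :
    ∀ᵐ ω ∂μ, ∀ v : EuclideanSpace ℝ ι, ⟪v, covarianceGap μ ℱ X n ω v⟫_ℝ =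
      v.ofLp ⬝ᵥ (∑ i ∈ range n,
        Matrix.of fun j k => (μ[fun ω => X i ω j * X i ω k | ℱ i]) ω) *ᵥ v.ofLp / 2 -
      v.ofLp ⬝ᵥ (∑ i ∈ range n, vecMulVec (X i ω).ofLp (X i ω).ofLp) *ᵥ v.ofLp := by
  classical
  filter_upwards [ae_all_iff.2 fun i =>
    condSecondMoment_ae_eq_toEuclideanCLM (m := ℱ i) (hX i)] with ω hω v
  simp only [inner_covarianceGap, hω, Matrix.inner_toEuclideanCLM, sum_sub_distrib, ← sum_div,
    sum_mulVec, dotProduct_sum, vecMulVec_mulVec]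
  congr 1
  refine sum_congr rfl fun i _ => ?_
  simp [EuclideanSpace.inner_eq_star_dotProduct, dotProduct_comm, pow_two]

end Coordinates

lemma two_mul_deviation_half_inv_le {D δ : ℝ} {n : ℕ} (hD : 0 ≤ D) (hn : 0 < n) (hδ : 0 < δ)
    (hδ1 : δ ≤ 1) :
    2 * (D * Real.log (1 + 2 / (1 / (2 * n))) + Real.log (1 / δ) + 3 * n * (1 / (2 * n))) ≤
      9 * D * Real.log (9 * n) + 8 * Real.log (2 / δ) := by
  have hn1 : (1 : ℝ) ≤ n := Nat.one_le_cast.2 hn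
  have hlog : Real.log (1 + 2 / (1 / (2 * n))) ≤ Real.log (9 * n) := by
    apply Real.log_le_log (by positivity)
    rw [div_div_eq_mul_div, div_one]
    linarith
  have hlog_nonneg : 0 ≤ D * Real.log (9 * n) := mul_nonneg hD (Real.log_nonneg (by linarith))
  have hδ_log : 0 ≤ Real.log (1 / δ) := Real.log_nonneg ((one_le_div hδ).2 hδ1)
  have hsplit : Real.log (2 / δ) = Real.log 2 + Real.log (1 / δ) := by
    rw [← Real.log_mul two_ne_zero (by positivity), mul_one_div]
  have hhalf : 3 * n * (1 / (2 * n)) = (3 / 2 : ℝ) := by field_simp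
  rw [hhalf, hsplit]
  linarith [mul_le_mul_of_nonneg_left hlog hD, Real.log_two_gt_d9]

theorem stmt_6_general {Ω ι : Type*} [Fintype ι] {m0 : MeasurableSpace Ω}
    (μ : Measure Ω) [IsProbabilityMeasure μ] (ℱ : Filtration ℕ m0) (n : ℕ) (X : ℕ → Ω → ι → ℝ)
    (hXadapted : ∀ i, Measurable[ℱ (i + 1)] (X i))
    (hXbd : ∀ i, ∀ᵐ ω ∂μ, Real.sqrt (X i ω ⬝ᵥ X i ω) ≤ 1)
    {δ : ℝ} (hδ : 0 < δ) (hδ1 : δ ≤ 1) :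
    ENNReal.ofReal (1 - δ) ≤
      μ {ω | ∀ v : ι → ℝ, v ⬝ᵥ v = 1 →
        v ⬝ᵥ (∑ i ∈ range n,
            Matrix.of fun j k => (μ[fun ω => X i ω j * X i ω k | ℱ i]) ω) *ᵥ v ≤
          2 * (v ⬝ᵥ (∑ i ∈ range n, vecMulVec (X i ω) (X i ω)) *ᵥ v) +
            9 * Fintype.card ι * Real.log (9 * n) + 8 * Real.log (2 / δ)} := by
  rcases n.eq_zero_or_pos with rfl | hn
  · have hlog : 0 ≤ Real.log (2 / δ) := Real.log_nonneg ((one_le_div hδ).2 (by linarith))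
    simp [hlog, hδ.le]
  have hnorm (v : ι → ℝ) : ‖WithLp.toLp 2 v‖ = √(v ⬝ᵥ v) := by
    simp [EuclideanSpace.norm_eq, dotProduct, pow_two]
  let Z (i : ℕ) (ω : Ω) : EuclideanSpace ℝ ι := WithLp.toLp 2 (X i ω)
  have hZ (i : ℕ) : StronglyMeasurable[ℱ (i + 1)] (Z i) :=
    (PiLp.continuous_toLp 2 _).comp_stronglyMeasurable (hXadapted i).stronglyMeasurable
  have hZ_bdd : ∀ i, ∀ᵐ ω ∂μ, ‖Z i ω‖ ≤ 1 := by simpa only [Z, hnorm] using hXbd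
  have hZ_mem (i : ℕ) : MemLp (Z i) 2 μ :=
    .of_bound ((hZ i).mono (ℱ.le _)).aestronglyMeasurable 1 (hZ_bdd i)
  refine (ofReal_one_sub_le_measure_forall_inner_covarianceGap_le (n := n) (ε := 1 / (2 * n))
    hZ hZ_bdd hδ (by positivity)).trans (measure_mono_ae ?_)
  filter_upwards [inner_covarianceGap_ae_eq_dotProduct (ℱ := ℱ) hZ_mem n] with ω hω hgap v hv
  have hle := hgap (WithLp.toLp 2 v) (by rw [hnorm, hv, Real.sqrt_one])
  rw [hω, finrank_euclideanSpace] at hle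
  linarith [two_mul_deviation_half_inv_le (Nat.cast_nonneg (Fintype.card ι)) hn hδ hδ1]

/-- **Uniform comparison of empirical and population covariance (Lemma: matrix_bernstein).**
Let `X₁, …, Xₙ` be conditionally centered random vectors in `ℝ^d` adapted to `{F_i}`
(each `X_i` realized by time `i+1`, `E[X_i | F_i] = 0`) with `‖X_i‖₂ ≤ 1` a.s.  With
`Σ̂ = ∑ᵢ Xᵢ Xᵢᵀ` and `Σ = ∑ᵢ E[Xᵢ Xᵢᵀ | F_i]` (entrywise conditional expectations),
for any `δ ∈ (0,1)`, with probability at least `1 − δ`, simultaneously for all unit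
vectors `v`: `vᵀ Σ v ≤ 2 vᵀ Σ̂ v + 9 d log(9n) + 8 log(2/δ)`. -/
theorem stmt_6 {Ω : Type*} {m0 : MeasurableSpace Ω}
    (μ : Measure Ω) [IsProbabilityMeasure μ]
    (ℱ : Filtration ℕ m0)
    {d n : ℕ}
    (X : ℕ → Ω → (Fin d → ℝ))
    (hXmeas : ∀ i, Measurable (X i))
    (hXadapted : ∀ i, Measurable[ℱ (i + 1)] (X i))
    (hXbd : ∀ i, ∀ᵐ ω ∂μ, Real.sqrt (X i ω ⬝ᵥ X i ω) ≤ 1)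
    (hcent : ∀ i, μ[X i | ℱ i] =ᵐ[μ] 0)
    (δ : ℝ) (hδ : 0 < δ) (hδ1 : δ < 1) :
    ENNReal.ofReal (1 - δ) ≤
      μ {ω | ∀ v : Fin d → ℝ, v ⬝ᵥ v = 1 →
        v ⬝ᵥ (∑ i ∈ Finset.range n,
            (Matrix.of fun j k => (μ[(fun ω' => X i ω' j * X i ω' k) | ℱ i]) ω)).mulVec v ≤
          2 * (v ⬝ᵥ (∑ i ∈ Finset.range n, vecMulVec (X i ω) (X i ω)).mulVec v) +
            9 * d * Real.log (9 * n) + 8 * Real.log (2 / δ)} := by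
  simpa only [Fintype.card_fin] using stmt_6_general μ ℱ n X hXadapted hXbd hδ hδ1.le
end

section
/- For any vectors z₁,…,z_n ∈ ℝ^d and any positive definite d×d matrix M, there exists a probability distribution w ∈ Δ([n]) with mean μ_w := E_{b∼w}[z_b] such that for every i ∈ [n], ‖z_i − μ_w‖²_M ≤ tr(M · Cov_{b∼w}(z_b)). -/
open Matrix Finset

/-!
For a quadratic form `Q`, such as `‖·‖²_M`, let `w` maximize the weighted variance `V` of the family
`z` over the simplex. Since the point mass `δᵢ` has variance zero, the law of total variance gives
`V (t • δᵢ + (1 - t) • w) = (1 - t) * V w + t * (1 - t) * Q (z i - μ_w)`. For `t` in `(0, 1)` the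
left side is at most `V w` by maximality, hence `(1 - t) * Q (z i - μ_w) ≤ V w`; let `t → 0`.
-/

/-- Variance, with respect to the quadratic map `Q`, of the family `z` under the weights `w`, as the
mean of `Q` minus `Q` of the mean. It is the weighted mean of `Q (z i - mean)` when the weights sum
to `1`; for the quadratic form of a matrix `M` it is the trace of `M` times the covariance. -/
def weightedVariance {R ι E N : Type*} [CommRing R] [Fintype ι] [AddCommGroup E] [Module R E]
    [AddCommGroup N] [Module R N] (Q : QuadraticMap R E N) (z : ι → E) (w : ι → R) : N :=
  ∑ j, w j • Q (z j) - Q (∑ j, w j • z j)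

section CommRing

variable {R ι E N : Type*} [CommRing R] [Fintype ι] [AddCommGroup E] [Module R E]
  [AddCommGroup N] [Module R N]

theorem quadraticMap_smul_add_smul_of_add_eq_one (Q : QuadraticMap R E N) (x y : E) {a b : R}
    (hab : a + b = 1) :
    Q (a • x + b • y) = a • Q x + b • Q y - (a * b) • Q (x - y) := by
  obtain rfl : b = 1 - a := eq_sub_of_add_eq' hab
  simp only [sub_eq_add_neg x, QuadraticMap.map_add Q, QuadraticMap.map_smul, QuadraticMap.map_neg,
    QuadraticMap.polar_smul_left, QuadraticMap.polar_smul_right, QuadraticMap.polar_neg_right]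
  module

theorem weightedVariance_eq_linearCombination (Q : QuadraticMap R E N) (z : ι → E) (w : ι → R) :
    weightedVariance Q z w =
      Fintype.linearCombination R (Q ∘ z) w - Q (Fintype.linearCombination R z w) :=
  rfl

theorem weightedVariance_single [DecidableEq ι] (Q : QuadraticMap R E N) (z : ι → E) (i : ι) :
    weightedVariance Q z (Pi.single i 1) = 0 := by
  simp [weightedVariance_eq_linearCombination]

theorem weightedVariance_smul_add_smul (Q : QuadraticMap R E N) (z : ι → E) (v w : ι → R) {a b : R}
    (hab : a + b = 1) :
    weightedVariance Q z (a • v + b • w) =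
      a • weightedVariance Q z v + b • weightedVariance Q z w +
        (a * b) • Q (∑ j, v j • z j - ∑ j, w j • z j) := by
  simp only [weightedVariance_eq_linearCombination, ← Fintype.linearCombination_apply, map_add,
    map_smul, quadraticMap_smul_add_smul_of_add_eq_one Q _ _ hab]
  module

theorem matrix_toQuadraticForm'_apply {m : Type*} [Fintype m] [DecidableEq m] (M : Matrix m m R)
    (x : m → R) : M.toQuadraticForm' x = x ⬝ᵥ M *ᵥ x :=
  toLinearMap₂'_apply' M x x

theorem trace_mul_covariance_eq_weightedVariance {m : Type*} [Fintype m] [DecidableEq m]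
    (M : Matrix m m R) (z : ι → m → R) (w : ι → R) :
    (M * ((∑ j, w j • vecMulVec (z j) (z j)) -
        vecMulVec (∑ j, w j • z j) (∑ j, w j • z j))).trace =
      weightedVariance M.toQuadraticForm' z w := by
  simp only [weightedVariance, matrix_toQuadraticForm'_apply, mul_sub, Matrix.mul_sum,
    Matrix.mul_smul, trace_sub, trace_sum, trace_smul, mul_vecMulVec, trace_vecMulVec,
    dotProduct_comm (M *ᵥ _)]

variable [TopologicalSpace R] [IsTopologicalRing R] [TopologicalSpace N] [IsModuleTopology R N]

theorem continuous_quadraticMap_of_finite_of_free [TopologicalSpace E] [IsModuleTopology R E]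
    [Module.Finite R E] [Module.Free R E] (Q : QuadraticMap R E N) : Continuous Q := by
  obtain ⟨B, rfl⟩ := LinearMap.BilinMap.toQuadraticMap_surjective Q
  exact (IsModuleTopology.continuous_bilinear_of_finite_left B).comp
    (continuous_id.prodMk continuous_id)

theorem continuous_weightedVariance (Q : QuadraticMap R E N) (z : ι → E) :
    Continuous (weightedVariance Q z) := by
  have : IsTopologicalAddGroup N := IsModuleTopology.topologicalAddGroup R N
  have hmean : Continuous fun w : ι → R ↦ Q (∑ j, w j • z j) :=
    continuous_quadraticMap_of_finite_of_free (Q.comp (Fintype.linearCombination R z))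
  exact (IsModuleTopology.continuous_of_linearMap (Fintype.linearCombination R (Q ∘ z))).sub hmean

end CommRing

section Real

variable {ι E : Type*} [Fintype ι] [AddCommGroup E] [Module ℝ E]

theorem weightedVariance_add_le_of_isMaxOn {Q : QuadraticForm ℝ E} {z : ι → E} {s : Set (ι → ℝ)}
    (hs : Convex ℝ s) {v w : ι → ℝ} (hv : v ∈ s) (hw : w ∈ s)
    (hmax : IsMaxOn (weightedVariance Q z) s w) :
    weightedVariance Q z v + Q (∑ j, v j • z j - ∑ j, w j • z j) ≤ weightedVariance Q z w := by
  set q := Q (∑ j, v j • z j - ∑ j, w j • z j)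
  have hmix {t : ℝ} (ht : t ∈ Set.Ioo 0 1) :
      weightedVariance Q z v + (1 - t) * q ≤ weightedVariance Q z w := by
    have hle : weightedVariance Q z (t • v + (1 - t) • w) ≤ weightedVariance Q z w :=
      hmax (hs hv hw ht.1.le (sub_nonneg.2 ht.2.le) (add_sub_cancel t 1))
    simp only [weightedVariance_smul_add_smul Q z v w (add_sub_cancel t 1), smul_eq_mul] at hle
    refine le_of_mul_le_mul_left ?_ ht.1
    linarith
  have hlim : Filter.Tendsto (fun t : ℝ ↦ weightedVariance Q z v + (1 - t) * q)
      (nhdsWithin 0 (Set.Ioi 0)) (nhds (weightedVariance Q z v + q)) :=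
    (Continuous.tendsto' (by fun_prop) _ _ (by simp)).mono_left nhdsWithin_le_nhds
  refine le_of_tendsto hlim ?_
  filter_upwards [Ioo_mem_nhdsGT one_pos] with t ht using hmix ht

theorem stmt_7_general [Nonempty ι] (Q : QuadraticForm ℝ E) (z : ι → E) :
    ∃ w ∈ stdSimplex ℝ ι, ∀ i, Q (z i - ∑ j, w j • z j) ≤ weightedVariance Q z w := by
  classical
  obtain ⟨w, hw, hmax⟩ := (isCompact_stdSimplex ℝ ι).exists_isMaxOn
    ⟨_, single_mem_stdSimplex ℝ (Classical.arbitrary ι)⟩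
    (continuous_weightedVariance Q z).continuousOn
  refine ⟨w, hw, fun i ↦ ?_⟩
  have hle := weightedVariance_add_le_of_isMaxOn (convex_stdSimplex ℝ ι)
    (single_mem_stdSimplex ℝ i) hw hmax
  simpa only [weightedVariance_single, zero_add, ← Fintype.linearCombination_apply,
    Fintype.linearCombination_apply_single, one_smul] using hle

end Real

/-- **Feasibility of the exploration distribution (convex duality lemma).**
For any vectors `z₁, …, zₙ ∈ ℝ^d` and any positive definite matrix `M`, there is a
probability distribution `w ∈ Δ([n])` with mean `μ_w = E_{b∼w}[z_b]` such that for every `i`,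
`‖zᵢ − μ_w‖²_M ≤ tr (M ⬝ Cov_{b∼w}(z_b))`. -/
theorem stmt_7 {d n : ℕ} (hn : 0 < n) (z : Fin n → (Fin d → ℝ))
    (M : Matrix (Fin d) (Fin d) ℝ) (hM : M.PosDef) :
    ∃ w : Fin n → ℝ, (∀ i, 0 ≤ w i) ∧ (∑ i, w i) = 1 ∧
      ∀ i : Fin n,
        (z i - ∑ j, w j • z j) ⬝ᵥ M.mulVec (z i - ∑ j, w j • z j) ≤
          (M * ((∑ j, w j • vecMulVec (z j) (z j)) -
            vecMulVec (∑ j, w j • z j) (∑ j, w j • z j))).trace := by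
  have : Nonempty (Fin n) := ⟨⟨0, hn⟩⟩
  obtain ⟨w, hw, hle⟩ := stmt_7_general M.toQuadraticForm' z
  simp only [matrix_toQuadraticForm'_apply, ← trace_mul_covariance_eq_weightedVariance] at hle
  exact ⟨w, hw.1, hw.2, hle⟩
end

section
/- Let X₁,…,X_T be vectors in ℝ^d with ‖X_t‖₂ ≤ 1, let λ > 0, and define Γ₁ := λI and Γ_{t+1} := Γ_t + X_t X_tᵀ. Then Σ_{t=1}^T tr(Γ_{t+1}⁻¹ X_t X_tᵀ) ≤ log det(Γ_{T+1}) − log det(Γ₁) ≤ d·log(1 + T/(dλ)). -/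
open Matrix Finset

/-!
Both inequalities are instances of the tangent-line inequality for the concave function `log det`
on positive definite matrices, `tr (B⁻¹ (B - A)) ≤ log det B - log det A`. For the first, take
`A = Γ t` and `B = Γ (t + 1)` and telescope. For the second, take `A = Γ T` and `B = m • 1`, where
`m = λ + T / d` bounds the average eigenvalue of `Γ T`, so that the left-hand side is nonnegative.

The tangent-line inequality itself is `log x ≤ x - 1` summed over the eigenvalues of `S * A * Sᴴ`,
where `B⁻¹ = Sᴴ * S`.
-/

lemma re_trace_le_re_trace_zero_add_mul {𝕜 n : Type*} [RCLike 𝕜] [Fintype n]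
    {Γ : ℕ → Matrix n n 𝕜} {c : ℝ}
    (hΓ : ∀ t, RCLike.re (Γ (t + 1) - Γ t).trace ≤ c) (T : ℕ) :
    RCLike.re (Γ T).trace ≤ RCLike.re (Γ 0).trace + T * c := by
  rw [← sub_le_iff_le_add', ← sum_range_sub fun t ↦ RCLike.re (Γ t).trace]
  have hincrement : ∀ t ∈ range T, RCLike.re (Γ (t + 1)).trace - RCLike.re (Γ t).trace ≤ c :=
    fun t _ ↦ by simpa using hΓ t
  simpa using sum_le_card_nsmul _ _ c hincrement

section LogDet

open scoped ComplexOrder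

-- The determinant of a positive definite matrix is a positive real number, so that
-- `Real.log ‖A.det‖` is the logarithm of `A.det` for matrices over either `ℝ` or `ℂ`.
variable {𝕜 n : Type*} [RCLike 𝕜] [Fintype n] [DecidableEq n] {A B : Matrix n n 𝕜}

lemma log_norm_det_le_re_trace_sub_card (hA : A.PosDef) :
    Real.log ‖A.det‖ ≤ RCLike.re A.trace - Fintype.card n := by
  have hdet : ‖A.det‖ = ∏ i, hA.1.eigenvalues i := by
    simp [hA.1.det_eq_prod_eigenvalues, abs_of_pos (hA.eigenvalues_pos _)]
  have htrace : RCLike.re A.trace = ∑ i, hA.1.eigenvalues i := by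
    simp [hA.1.trace_eq_sum_eigenvalues]
  calc Real.log ‖A.det‖ = ∑ i, Real.log (hA.1.eigenvalues i) := by
        rw [hdet, Real.log_prod fun i _ ↦ (hA.eigenvalues_pos i).ne']
    _ ≤ ∑ i, (hA.1.eigenvalues i - 1) :=
        sum_le_sum fun i _ ↦ Real.log_le_sub_one_of_pos (hA.eigenvalues_pos i)
    _ = RCLike.re A.trace - Fintype.card n := by simp [htrace]

open scoped MatrixOrder in
lemma log_norm_det_mul_le_re_trace_mul_sub_card (hA : A.PosDef) (hB : B.PosDef) :
    Real.log ‖(A * B).det‖ ≤ RCLike.re (A * B).trace - Fintype.card n := by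
  obtain ⟨S, hS, hSA⟩ :=
    CStarAlgebra.isStrictlyPositive_iff_eq_star_mul_self.mp hA.isStrictlyPositive
  -- `A * B` need not be Hermitian, but `S * B * Sᴴ` is, with the same determinant and trace.
  have hcongr : (S * B * Sᴴ).PosDef :=
    hB.mul_mul_conjTranspose_same (vecMul_injective_of_isUnit hS)
  have hAB : A * B = Sᴴ * (S * B) := by
    rw [hSA, star_eq_conjTranspose, Matrix.mul_assoc]
  rw [hAB, det_mul_comm, trace_mul_comm]
  exact log_norm_det_le_re_trace_sub_card hcongr

lemma re_trace_inv_mul_sub_le_log_norm_det_sub (hA : A.PosDef) (hB : B.PosDef) :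
    RCLike.re (B⁻¹ * (B - A)).trace ≤ Real.log ‖B.det‖ - Real.log ‖A.det‖ := by
  have hdet : Real.log ‖(B⁻¹ * A).det‖ = Real.log ‖A.det‖ - Real.log ‖B.det‖ := by
    rw [det_mul, det_nonsing_inv, Ring.inverse_eq_inv', inv_mul_eq_div, norm_div,
      Real.log_div (norm_ne_zero_iff.mpr hA.det_pos.ne') (norm_ne_zero_iff.mpr hB.det_pos.ne')]
  have htrace : RCLike.re (B⁻¹ * (B - A)).trace = Fintype.card n - RCLike.re (B⁻¹ * A).trace := by
    simp [Matrix.mul_sub, nonsing_inv_mul B (isUnit_iff_ne_zero.mpr hB.det_pos.ne')]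
  linarith [log_norm_det_mul_le_re_trace_mul_sub_card hB.inv hA]

lemma log_norm_det_smul_one (m : ℝ) :
    Real.log ‖(m • (1 : Matrix n n 𝕜)).det‖ = Fintype.card n * Real.log m := by
  simp [det_smul_of_tower, norm_smul]

lemma log_norm_det_le_card_mul_log_of_re_trace_le {m : ℝ} (hA : A.PosDef) (hm : 0 < m)
    (htrace : RCLike.re A.trace ≤ Fintype.card n * m) :
    Real.log ‖A.det‖ ≤ Fintype.card n * Real.log m := by
  have htangent := re_trace_inv_mul_sub_le_log_norm_det_sub hA (PosDef.one.smul hm)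
  have hinv : (m • (1 : Matrix n n 𝕜))⁻¹ = m⁻¹ • 1 :=
    inv_eq_left_inv (by simp [smul_smul, hm.ne'])
  rw [log_norm_det_smul_one, hinv] at htangent
  have hnonneg : 0 ≤ RCLike.re ((m⁻¹ • (1 : Matrix n n 𝕜)) * (m • 1 - A)).trace := by
    have htrace_eq : RCLike.re ((m⁻¹ • (1 : Matrix n n 𝕜)) * (m • 1 - A)).trace =
        m⁻¹ * (Fintype.card n * m - RCLike.re A.trace) := by
      simp [RCLike.smul_re, mul_comm m]
    rw [htrace_eq]
    exact mul_nonneg (inv_nonneg.mpr hm.le) (sub_nonneg.mpr htrace)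
  linarith

lemma sum_re_trace_inv_mul_sub_le_log_norm_det_sub {Γ : ℕ → Matrix n n 𝕜}
    (hΓ : ∀ t, (Γ t).PosDef) (T : ℕ) :
    ∑ t ∈ range T, RCLike.re ((Γ (t + 1))⁻¹ * (Γ (t + 1) - Γ t)).trace ≤
      Real.log ‖(Γ T).det‖ - Real.log ‖(Γ 0).det‖ := by
  rw [← sum_range_sub fun t ↦ Real.log ‖(Γ t).det‖]
  exact sum_le_sum fun t _ ↦ re_trace_inv_mul_sub_le_log_norm_det_sub (hΓ t) (hΓ (t + 1))

theorem stmt_9_general [Nonempty n] (T : ℕ) {lam : ℝ} (hlam : 0 < lam)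
    {P Γ : ℕ → Matrix n n 𝕜} (hP : ∀ t, (P t).PosSemidef) (hPtrace : ∀ t, RCLike.re (P t).trace ≤ 1)
    (hΓ0 : Γ 0 = lam • (1 : Matrix n n 𝕜)) (hΓ : ∀ t, Γ (t + 1) = Γ t + P t) :
    (∑ t ∈ range T, RCLike.re ((Γ (t + 1))⁻¹ * P t).trace ≤
        Real.log ‖(Γ T).det‖ - Real.log ‖(Γ 0).det‖) ∧
      Real.log ‖(Γ T).det‖ - Real.log ‖(Γ 0).det‖ ≤
        Fintype.card n * Real.log (1 + T / (Fintype.card n * lam)) := by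
  have hposDef : ∀ t, (Γ t).PosDef := by
    intro t
    induction t with
    | zero => exact hΓ0 ▸ PosDef.one.smul hlam
    | succ t ih => exact hΓ t ▸ ih.add_posSemidef (hP t)
  have hdiff : ∀ t, P t = Γ (t + 1) - Γ t := fun t ↦ by rw [hΓ, add_sub_cancel_left]
  refine ⟨by simpa only [hdiff] using sum_re_trace_inv_mul_sub_le_log_norm_det_sub hposDef T, ?_⟩
  have htrace : RCLike.re (Γ T).trace ≤
      Fintype.card n * (lam * (1 + T / (Fintype.card n * lam))) := by
    have hgrowth : RCLike.re (Γ T).trace ≤ Fintype.card n * lam + T := by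
      simpa [hΓ0, RCLike.smul_re, mul_comm lam] using
        re_trace_le_re_trace_zero_add_mul (Γ := Γ) (c := 1) (fun t ↦ hdiff t ▸ hPtrace t) T
    refine hgrowth.trans_eq ?_
    field_simp
  have hdetT := log_norm_det_le_card_mul_log_of_re_trace_le (hposDef T) (by positivity) htrace
  rw [Real.log_mul hlam.ne' (by positivity)] at hdetT
  rw [hΓ0, log_norm_det_smul_one]
  linarith

end LogDet

/-- **Telescoping determinant bound.**
Let `X₁, …, X_T ∈ ℝ^d` with `‖X_t‖₂ ≤ 1`, `λ > 0`, `Γ₁ = λI`, `Γ_{t+1} = Γ_t + X_t X_tᵀ`.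
Then `∑_{t=1}^T tr(Γ_{t+1}⁻¹ X_t X_tᵀ) ≤ log det Γ_{T+1} − log det Γ₁ ≤ d log(1 + T/(dλ))`.
(Indices are shifted so that rounds are `0, …, T−1` and `Γ 0 = λI`.) -/
theorem stmt_9 {d : ℕ} (hd : 0 < d) (T : ℕ) (lam : ℝ) (hlam : 0 < lam)
    (X : ℕ → (Fin d → ℝ)) (hX : ∀ t, Real.sqrt (X t ⬝ᵥ X t) ≤ 1)
    (Γ : ℕ → Matrix (Fin d) (Fin d) ℝ)
    (hΓ0 : Γ 0 = lam • (1 : Matrix (Fin d) (Fin d) ℝ))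
    (hΓ : ∀ t, Γ (t + 1) = Γ t + vecMulVec (X t) (X t)) :
    (∑ t ∈ Finset.range T, ((Γ (t + 1))⁻¹ * vecMulVec (X t) (X t)).trace ≤
        Real.log (Γ T).det - Real.log (Γ 0).det) ∧
      Real.log (Γ T).det - Real.log (Γ 0).det ≤ d * Real.log (1 + T / (d * lam)) := by
  have : NeZero d := ⟨hd.ne'⟩
  simpa using stmt_9_general T hlam (fun t ↦ posSemidef_vecMulVec_self_star (X t))
    (fun t ↦ by simpa [trace_vecMulVec] using hX t) hΓ0 hΓ
end
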